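/- arXiv:2307.11529 — 3 statements merged into one kernel-verified Lean document; each statement's English description precedes it below -/
import Mathlib

section
/- Let X and Y be uniformly locally finite metric spaces which are coarsely equivalent, and suppose X is non-amenable. Then X and Y are bijectively coarsely equivalent. -/
/-!
Let `f : X → Y` and `g : Y → X` be coarse maps inverse up to closeness. Both have uniformly
bounded finite fibres (`exists_card_le_mul_card_image`), so passing to an image costs at most a
constant factor `m` in cardinality, while non-amenability of `X` provides a radius `r` at which
neighbourhoods of finite sets grow by the factor `m`. This verifies Hall's marriage condition in
both directions: for the sets of points near `g y`, since the `r`-neighbourhood of `g(S)` has at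
least `m |g(S)| ≥ |S|` points, and for the sets of points near `f x`, since the image under `f`
of the `r`-neighbourhood of `S` has at least `|S|` points. Hall's theorem gives injections
`X → Y` close to `f` and `Y → X` close to `g`. The relational Schröder–Bernstein theorem merges
them into a bijection close to `f` (each of its values comes from one of the two injections), and
a map close to a coarse equivalence is a coarse equivalence.
-/

open Metric Set

noncomputable section

/-- A map between metric spaces is *coarse* if for every `r > 0` there is `s > 0` such that
points at distance `< r` are mapped to points at distance `< s`. -/
def CoarseMap {X Y : Type*} [MetricSpace X] [MetricSpace Y] (f : X → Y) : Prop :=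
  ∀ r : ℝ, 0 < r → ∃ s : ℝ, 0 < s ∧ ∀ x z : X, dist x z < r → dist (f x) (f z) < s

/-- Two maps into a metric space are *close* if they are at uniformly bounded distance. -/
def CloseMaps {X Y : Type*} [MetricSpace Y] (f g : X → Y) : Prop :=
  ∃ C : ℝ, ∀ x : X, dist (f x) (g x) ≤ C

/-- A coarse map is a *coarse equivalence* if it has a coarse inverse up to closeness. -/
def CoarseEquivMap {X Y : Type*} [MetricSpace X] [MetricSpace Y] (f : X → Y) : Prop :=
  CoarseMap f ∧ ∃ g : Y → X, CoarseMap g ∧ CloseMaps (g ∘ f) id ∧ CloseMaps (f ∘ g) id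

/-- Two metric spaces are *bijectively coarsely equivalent* if there is a bijective coarse
equivalence between them. -/
def BijCoarseEquiv (X Y : Type*) [MetricSpace X] [MetricSpace Y] : Prop :=
  ∃ f : X → Y, Function.Bijective f ∧ CoarseEquivMap f

/-- A metric space is *uniformly locally finite* if there is a uniform bound on the
cardinality of balls of any fixed radius. -/
def IsULFSpace (X : Type*) [MetricSpace X] : Prop :=
  ∀ r : ℝ, 0 < r → ∃ N : ℕ, ∀ x : X,
    (Metric.closedBall x r).Finite ∧ (Metric.closedBall x r).ncard ≤ N

/-- A map is *uniformly finite-to-one* if preimages of singletons have uniformly bounded size. -/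
def UnifFiniteToOne {X Y : Type*} (f : X → Y) : Prop :=
  ∃ m : ℕ, ∀ y : Y, (f ⁻¹' {y}).Finite ∧ (f ⁻¹' {y}).ncard ≤ m

/-- A u.l.f. metric space is *non-amenable* if for every `C > 1` there is `r > 0` such that
`|N_r(S)| ≥ C |S|` for every finite `S`. -/
def NonAmenableSpace (X : Type*) [MetricSpace X] : Prop :=
  ∀ C : ℝ, 1 < C → ∃ r : ℝ, 0 < r ∧ ∀ S : Set X, S.Finite →
    C * (S.ncard : ℝ) ≤ (({x : X | ∃ s ∈ S, dist x s ≤ r}).ncard : ℝ)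

/-- The outer `r`-boundary of a set `A`: points outside `A` at distance at most `r` from `A`. -/
def outerBdry {X : Type*} [MetricSpace X] (r : ℝ) (A : Set X) : Set X :=
  {x : X | x ∉ A ∧ ∃ a ∈ A, dist x a ≤ r}

/-- `Xn` is a partition of the ambient space into finite pieces whose mutual distances tend
to infinity: a *coarse disjoint union*. -/
def IsCDU {X : Type*} [MetricSpace X] (Xn : ℕ → Set X) : Prop :=
  (∀ x : X, ∃! n : ℕ, x ∈ Xn n) ∧ (∀ n : ℕ, (Xn n).Finite) ∧
  ∀ R : ℝ, ∃ k : ℕ, ∀ m n : ℕ, m ≠ n → k ≤ m + n →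
    ∀ x ∈ Xn m, ∀ y ∈ Xn n, R ≤ dist x y

/-- A subset is `t`-connected if any two of its points are joined by a chain in the subset
with consecutive distances at most `t`. -/
def TConnSubset {X : Type*} [MetricSpace X] (t : ℝ) (S : Set X) : Prop :=
  ∀ x ∈ S, ∀ y ∈ S, ∃ (m : ℕ) (c : ℕ → X), c 0 = x ∧ c m = y ∧
    (∀ i : ℕ, i ≤ m → c i ∈ S) ∧ ∀ i : ℕ, i < m → dist (c i) (c (i + 1)) ≤ t

/-- The metric restricted to `S` is the shortest path metric of the graph on `S` whose edges
are the pairs at distance `1`: any two points of `S` are joined by a chain of unit-distance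
steps in `S` whose length realizes their distance. -/
def GraphMetricOn {X : Type*} [MetricSpace X] (S : Set X) : Prop :=
  ∀ x ∈ S, ∀ y ∈ S, ∃ (m : ℕ) (c : ℕ → X), dist x y = (m : ℝ) ∧ c 0 = x ∧ c m = y ∧
    (∀ i : ℕ, i ≤ m → c i ∈ S) ∧ ∀ i : ℕ, i < m → dist (c i) (c (i + 1)) = 1

/-- `S` is a `(k,h)`-expander graph (with its shortest path metric): vertex degrees are at
most `k` and `|∂ A| ≥ h (1 - |A|/|S|) |A|` for every `A ⊆ S`. -/
def ExpanderGraphSet {X : Type*} [MetricSpace X] (k : ℕ) (h : ℝ) (S : Set X) : Prop :=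
  GraphMetricOn S ∧
  (∀ x ∈ S, ({z : X | z ∈ S ∧ z ≠ x ∧ dist z x ≤ 1}).ncard ≤ k) ∧
  ∀ A : Set X, A ⊆ S →
    h * (1 - (A.ncard : ℝ) / (S.ncard : ℝ)) * (A.ncard : ℝ) ≤ ((outerBdry 1 A ∩ S).ncard : ℝ)

/-- `Xn` is a sequence of expander graphs: all are `(k,h)`-expanders for fixed `k, h` and
their cardinalities tend to infinity. -/
def ExpanderSeq {X : Type*} [MetricSpace X] (Xn : ℕ → Set X) : Prop :=
  ∃ (k : ℕ) (h : ℝ), 0 < h ∧ (∀ n : ℕ, ExpanderGraphSet k h (Xn n)) ∧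
    Filter.Tendsto (fun n => (Xn n).ncard) Filter.atTop Filter.atTop

/-- `a : X → ℤ` is a boundary in uniformly finite homology: `a x = ∑_z (b x z - b z x)` for a
bounded `b` supported at bounded distance from the diagonal. -/
def UFBoundary {X : Type*} [MetricSpace X] (a : X → ℤ) : Prop :=
  ∃ (b : X → X → ℤ) (K : ℤ) (r : ℝ),
    (∀ x z : X, |b x z| ≤ K) ∧ (∀ x z : X, b x z ≠ 0 → dist x z ≤ r) ∧
    ∀ x : X, a x = ∑ᶠ z : X, (b x z - b z x)

/-- Points of `X` with the same image under `f` lie in a common ball of radius `2C`, so the fibres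
of `f` are uniformly finite. The bound `2 ≤ m` lets `m` serve as an expansion constant. -/
lemma exists_card_le_mul_card_image {X Y : Type*} [MetricSpace X] [MetricSpace Y] [DecidableEq Y]
    (hX : IsULFSpace X) {f : X → Y} {g : Y → X} (hgf : CloseMaps (g ∘ f) id) :
    ∃ m : ℕ, 2 ≤ m ∧ ∀ S : Finset X, S.card ≤ m * (S.image f).card := by
  obtain ⟨C, hC⟩ := hgf
  obtain ⟨N, hN⟩ := hX (2 * |C| + 1) (by positivity)
  refine ⟨N + 2, by omega, fun S => Finset.card_le_mul_card_image S _ fun y hy => ?_⟩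
  obtain ⟨x₀, -, rfl⟩ := Finset.mem_image.1 hy
  have hsub : ((S.filter fun x => f x = f x₀ : Finset X) : Set X) ⊆
      closedBall x₀ (2 * |C| + 1) := by
    intro x hx
    have hfx : f x = f x₀ := (Finset.mem_filter.1 (Finset.mem_coe.1 hx)).2
    have h1 := hC x
    have h2 := hC x₀
    simp only [Function.comp_apply, id, hfx] at h1 h2
    have h3 := dist_triangle_left x x₀ (g (f x₀))
    have h4 := le_abs_self C
    exact mem_closedBall.2 (by linarith)
  have := Set.ncard_le_ncard hsub (hN x₀).1
  rw [Set.ncard_coe_finset] at this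
  have := (hN x₀).2
  omega

/-- Non-amenability with an integer expansion constant, for finite sets. -/
lemma NonAmenableSpace.exists_finset {X : Type*} [MetricSpace X] [DecidableEq X]
    (hX : IsULFSpace X) (hna : NonAmenableSpace X) {m : ℕ} (hm : 2 ≤ m) :
    ∃ (r : ℝ) (B : X → Finset X), 0 < r ∧ (∀ x z, z ∈ B x ↔ dist z x ≤ r) ∧
      ∀ S : Finset X, m * S.card ≤ (S.biUnion B).card := by
  obtain ⟨r, hr, h⟩ := hna m (by exact_mod_cast hm)
  obtain ⟨N, hN⟩ := hX r hr
  have hmem : ∀ x z, z ∈ (hN x).1.toFinset ↔ dist z x ≤ r := fun x z => by simp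
  refine ⟨r, fun x => (hN x).1.toFinset, hr, hmem, fun S => ?_⟩
  have hS := h S S.finite_toSet
  have heq : {x : X | ∃ s ∈ (S : Set X), dist x s ≤ r} =
      (S.biUnion fun x => (hN x).1.toFinset : Finset X) := by
    ext z; simp
  rw [heq, Set.ncard_coe_finset, Set.ncard_coe_finset] at hS
  exact_mod_cast hS

/-- An injection into the non-amenable space close to a given coarse equivalence. -/
lemma exists_injective_into_nonAmenable {X Y : Type*} [MetricSpace X] [MetricSpace Y]
    (hX : IsULFSpace X) (hY : IsULFSpace Y) (hna : NonAmenableSpace X)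
    {f : X → Y} {g : Y → X} (hfg : CloseMaps (f ∘ g) id) :
    ∃ b : Y → X, Function.Injective b ∧ CloseMaps b g := by
  classical
  obtain ⟨m, hm, hfib⟩ := exists_card_le_mul_card_image hY hfg
  obtain ⟨r, B, -, hB, hexp⟩ := hna.exists_finset hX hm
  obtain ⟨b, hb, hbB⟩ :=
    (Finset.all_card_le_biUnion_card_iff_exists_injective fun y => B (g y)).1 fun S => by
      rw [← Finset.image_biUnion]
      exact (hfib S).trans (hexp _)
  exact ⟨b, hb, r, fun y => (hB _ _).1 (hbB y)⟩

/-- An injection out of the non-amenable space close to a given coarse equivalence. -/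
lemma exists_injective_of_nonAmenable {X Y : Type*} [MetricSpace X] [MetricSpace Y]
    (hX : IsULFSpace X) (hY : IsULFSpace Y) (hna : NonAmenableSpace X)
    {f : X → Y} {g : Y → X} (hf : CoarseMap f) (hgf : CloseMaps (g ∘ f) id) :
    ∃ a : X → Y, Function.Injective a ∧ CloseMaps a f := by
  classical
  obtain ⟨m, hm, hfib⟩ := exists_card_le_mul_card_image hX hgf
  obtain ⟨r, B, hr, hB, hexp⟩ := hna.exists_finset hX hm
  obtain ⟨s, hs, hfs⟩ := hf (r + 1) (by linarith)
  obtain ⟨N, hN⟩ := hY s hs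
  obtain ⟨a, ha, haB⟩ :=
    (Finset.all_card_le_biUnion_card_iff_exists_injective
      fun x => (hN (f x)).1.toFinset).1 fun S => by
      have hsub : (S.biUnion B).image f ⊆ S.biUnion fun x => (hN (f x)).1.toFinset := by
        intro y hy
        obtain ⟨z, hz, rfl⟩ := Finset.mem_image.1 hy
        obtain ⟨x, hx, hzx⟩ := Finset.mem_biUnion.1 hz
        refine Finset.mem_biUnion.2 ⟨x, hx, (Set.Finite.mem_toFinset _).2 (mem_closedBall.2 ?_)⟩
        have := (hB x z).1 hzx
        exact (hfs z x (by linarith)).le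
      refine le_trans ?_ (Finset.card_le_card hsub)
      exact Nat.le_of_mul_le_mul_left ((hexp S).trans (hfib _)) (by omega)
  exact ⟨a, ha, s, fun x => mem_closedBall.1 ((Set.Finite.mem_toFinset _).1 (haB x))⟩

lemma CoarseMap.dist_le {X Y : Type*} [MetricSpace X] [MetricSpace Y] {f : X → Y}
    (hf : CoarseMap f) (r : ℝ) : ∃ s : ℝ, ∀ x z : X, dist x z ≤ r → dist (f x) (f z) ≤ s := by
  obtain ⟨s, -, hs⟩ := hf (|r| + 1) (by positivity)
  exact ⟨s, fun x z h => (hs x z (by linarith [le_abs_self r])).le⟩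

lemma CoarseEquivMap.of_close {X Y : Type*} [MetricSpace X] [MetricSpace Y] {f h : X → Y}
    (hf : CoarseEquivMap f) (hh : CloseMaps h f) : CoarseEquivMap h := by
  obtain ⟨hfc, g, hg, ⟨C, hC⟩, ⟨D, hD⟩⟩ := hf
  obtain ⟨L, hL⟩ := hh
  refine ⟨fun r hr => ?_, g, hg, ?_, ?_⟩
  · obtain ⟨s, hs, hfs⟩ := hfc r hr
    refine ⟨s + 2 * |L|, by positivity, fun x z hxz => ?_⟩
    have h1 := hfs x z hxz
    have h2 := hL x
    have h3 := hL z
    rw [dist_comm] at h3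
    have h4 := dist_triangle4 (h x) (f x) (f z) (h z)
    linarith [le_abs_self L]
  · obtain ⟨s, hs⟩ := hg.dist_le L
    exact ⟨s + C, fun x => (dist_triangle _ (g (f x)) _).trans
      (add_le_add (hs _ _ (hL x)) (hC x))⟩
  · exact ⟨L + D, fun y => (dist_triangle _ (f (g y)) _).trans
      (add_le_add (hL (g y)) (hD y))⟩

/-- If `X` and `Y` are u.l.f. metric spaces which are coarsely equivalent and
`X` is non-amenable, then `X` and `Y` are bijectively coarsely equivalent. -/
theorem stmt0 {X Y : Type*} [MetricSpace X] [MetricSpace Y]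
    (hX : IsULFSpace X) (hY : IsULFSpace Y) (hna : NonAmenableSpace X)
    (hce : ∃ f : X → Y, CoarseEquivMap f) :
    BijCoarseEquiv X Y := by
  obtain ⟨f, hfe⟩ := hce
  obtain ⟨hf, g, hg, hgf, hfg⟩ := id hfe
  obtain ⟨a, ha, K, hK⟩ := exists_injective_of_nonAmenable hX hY hna hf hgf
  obtain ⟨b, hb, r, hr⟩ := exists_injective_into_nonAmenable hX hY hna hfg
  obtain ⟨s, hs⟩ := hf.dist_le r
  obtain ⟨D, hD⟩ := hfg
  -- `K` bounds the distance from `f` along `a`, and `s + D` bounds it along the inverse of `b`.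
  obtain ⟨h, hbij, hh⟩ := Function.Embedding.schroeder_bernstein_of_rel ha hb
    (fun x y => dist y (f x) ≤ max K (s + D))
    (fun x => (hK x).trans (le_max_left _ _))
    (fun y => by
      refine le_trans ?_ (le_max_right _ _)
      rw [dist_comm]
      exact (dist_triangle _ (f (g y)) _).trans (add_le_add (hs _ _ (hr y)) (hD y)))
  exact ⟨h, hbij, hfe.of_close ⟨_, hh⟩⟩
end
end

section
/- Let X and Y be coarse disjoint unions of expander graphs. If the uniform Roe algebras C*_u(X) and C*_u(Y) are isomorphic as C*-algebras, then X and Y are bijectively coarsely equivalent. -/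
/-!
An isomorphism of uniform Roe algebras is implemented by a unitary `U : ℓ²(X) → ℓ²(Y)`
(`exists_unitary`): both algebras contain the rank-one operators. The analytic input about `U` is
that the operators `U v χ_M U⁻¹` are quasi-local uniformly over all subsets `M ⊆ X` (`equi_qloc`), a
Baire category argument on `{0,1}^X`. From it follow:

* every row and every column of `U` has an entry of size at least a fixed `δ > 0` (`exists_delta`):
  otherwise a choice of signs yields `M` such that `U χ_M U⁻¹ δ_y` has a large component far
  from `y`. Choosing such entries gives maps `f : X → Y` and `g : Y → X`;
* `f` and `g` are coarse and mutually inverse up to bounded distance (`coarse_of_entries`,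
  `close_of_entries`);
* if `Z ⊆ X` is finite and far from its complement, then `|g⁻¹(Z)| = |Z|` (`card_fiber`): the
  projection `U χ_Z U⁻¹` almost commutes with all diagonal projections, and a second use of
  signs shows that it is strictly contractive on the span of the `δ_y` with `g y ∉ Z`, and likewise
  its complement on the span of the `δ_y` with `g y ∈ Z`.

It remains to replace `f` by a bijection at bounded distance. Merging finitely many pieces of
`X`, one may assume that all pieces are far apart; then a piece `Z` and `W = g⁻¹(Z)` have the same
cardinality and `f` maps `Z` into `W`. For every piece which is an expander, Hall's condition for
matching `x ∈ Z` with points of `W` near `f x` holds with a uniform radius (`hall_condition`): if a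
neighbourhood of `A ⊆ Z` is less than half of `Z`, it is much larger than `A`, and otherwise the
same growth, applied to the image under `g` of the points of `W` far from `f(A)`, shows that there
are few such points. The one merged piece is finite, so any bijection does.
-/

open Metric Set

noncomputable section

/-- The Hilbert space `ℓ²(X)`. -/
abbrev ell2 (X : Type*) : Type _ := lp (fun _ : X => ℂ) 2

/-- Bounded operators on `ℓ²(X)`. -/
abbrev BOps (X : Type*) : Type _ := ell2 X →L[ℂ] ell2 X

/-- The standard basis vector `δ_x` of `ℓ²(X)`. -/
def rdelta (X : Type*) [DecidableEq X] (x : X) : ell2 X := lp.single 2 x 1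

/-- The matrix entry `⟨a δ_x, δ_z⟩` of an operator `a` on `ℓ²(X)`. -/
def entryOf {X : Type*} [DecidableEq X] (a : BOps X) (x z : X) : ℂ :=
  @inner ℂ (ell2 X) _ (a (rdelta X x)) (rdelta X z)

/-- An operator on `ℓ²(X)` has finite propagation if its matrix entries vanish at pairs of
points at distance more than some `r`. -/
def HasFinProp {X : Type*} [MetricSpace X] [DecidableEq X] (a : BOps X) : Prop :=
  ∃ r : ℝ, ∀ x z : X, r < dist x z → entryOf a x z = 0

/-- The uniform Roe algebra of `X`, as a subset of `B(ℓ²(X))`: the norm closure of the set of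
finite propagation operators. -/
def RoeSet (X : Type*) [MetricSpace X] [DecidableEq X] : Set (BOps X) :=
  closure {a : BOps X | HasFinProp a}

/-- The uniform Roe algebras of `X` and `Y` are isomorphic as C*-algebras: there is a bijection
between them preserving addition, scalar multiplication, multiplication and adjoints. -/
def RoeIso (X Y : Type*) [MetricSpace X] [MetricSpace Y] [DecidableEq X] [DecidableEq Y] :
    Prop :=
  ∃ Φ : BOps X → BOps Y,
    Set.BijOn Φ (RoeSet X) (RoeSet Y) ∧
    (∀ a ∈ RoeSet X, ∀ b ∈ RoeSet X, Φ (a + b) = Φ a + Φ b) ∧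
    (∀ (c : ℂ), ∀ a ∈ RoeSet X, Φ (c • a) = c • Φ a) ∧
    (∀ a ∈ RoeSet X, ∀ b ∈ RoeSet X, Φ (a * b) = Φ a * Φ b) ∧
    (∀ a ∈ RoeSet X, Φ (star a) = star (Φ a))

open scoped InnerProductSpace

/-! ### Vectors and diagonal projections on `ℓ²` -/

lemma inner_rdelta {X : Type*} [DecidableEq X] (x : X) (ξ : ell2 X) :
    ⟪rdelta X x, ξ⟫_ℂ = ξ x := by
  rw [rdelta, lp.inner_single_left]; simp

lemma rdelta_apply {X : Type*} [DecidableEq X] (x z : X) :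
    (rdelta X x : ell2 X) z = if z = x then 1 else 0 := by
  rw [rdelta, lp.single_apply, Pi.single_apply]

lemma norm_rdelta {X : Type*} [DecidableEq X] (x : X) : ‖rdelta X x‖ = 1 := by
  rw [rdelta, lp.norm_single (by norm_num)]; simp

lemma hasSum_rdelta {X : Type*} [DecidableEq X] (ξ : ell2 X) :
    HasSum (fun x => ξ x • rdelta X x) ξ := by
  convert lp.hasSum_single (p := 2) (by norm_num) ξ using 2 with x
  rw [rdelta, ← lp.single_smul]; simp

lemma hasSum_norm_sq {X : Type*} (ξ : ell2 X) :
    HasSum (fun x => ‖ξ x‖ ^ 2) (‖ξ‖ ^ 2) := by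
  have := lp.hasSum_norm (p := 2) (by norm_num) ξ
  simpa using this

lemma norm_coord_le {X : Type*} (ξ : ell2 X) (x : X) : ‖ξ x‖ ≤ ‖ξ‖ :=
  lp.norm_apply_le_norm (by norm_num) ξ x

/-- The diagonal projection `χ_M` of `ℓ²(X)` onto `ℓ²(M)`. -/
def chi {X : Type*} (M : Set X) : BOps X :=
  LinearMap.mkContinuous
    { toFun := fun ξ => ⟨M.indicator (ξ : X → ℂ),
        (lp.memℓp ξ).mono' (fun x => norm_indicator_le_norm_self _ _)⟩
      map_add' := fun ξ η => by
        ext x; exact congrFun (Set.indicator_add' M (ξ : X → ℂ) (η : X → ℂ)) x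
      map_smul' := fun c ξ => by
        ext x; exact congrFun (Set.indicator_const_smul M c (ξ : X → ℂ)) x }
    1 (fun ξ => by
      rw [one_mul]
      exact lp.norm_mono (by norm_num) (fun x => norm_indicator_le_norm_self _ _))

open Classical in
lemma chi_apply {X : Type*} (M : Set X) (ξ : ell2 X) (x : X) :
    (chi M ξ : ell2 X) x = if x ∈ M then ξ x else 0 := by
  change M.indicator (ξ : X → ℂ) x = _
  rw [Set.indicator_apply]

lemma chi_apply_mem {X : Type*} {M : Set X} (ξ : ell2 X) {x : X} (h : x ∈ M) :
    (chi M ξ : ell2 X) x = ξ x := by classical simp [chi_apply, h]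

lemma chi_apply_notMem {X : Type*} {M : Set X} (ξ : ell2 X) {x : X} (h : x ∉ M) :
    (chi M ξ : ell2 X) x = 0 := by classical simp [chi_apply, h]

lemma norm_chi_le {X : Type*} (M : Set X) (ξ : ell2 X) : ‖chi M ξ‖ ≤ ‖ξ‖ :=
  lp.norm_mono (by norm_num) (fun x => norm_indicator_le_norm_self _ _)

lemma chi_chi {X : Type*} (M : Set X) (ξ : ell2 X) : chi M (chi M ξ) = chi M ξ := by
  classical
  ext x; simp only [chi_apply]; split_ifs <;> rfl

lemma chi_compl {X : Type*} (M : Set X) (ξ : ell2 X) : chi Mᶜ ξ = ξ - chi M ξ := by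
  classical
  ext x; simp only [lp.coeFn_sub, Pi.sub_apply, chi_apply, Set.mem_compl_iff]
  split_ifs <;> simp_all

lemma inner_chi {X : Type*} (M : Set X) (ξ η : ell2 X) : ⟪chi M ξ, η⟫_ℂ = ⟪ξ, chi M η⟫_ℂ := by
  classical
  rw [lp.inner_eq_tsum, lp.inner_eq_tsum]
  congr 1; ext x; simp only [chi_apply]; split_ifs <;> simp

lemma norm_sq_chi_add {X : Type*} (M : Set X) (ξ : ell2 X) :
    ‖chi M ξ‖ ^ 2 + ‖chi Mᶜ ξ‖ ^ 2 = ‖ξ‖ ^ 2 := by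
  classical
  have h1 := (hasSum_norm_sq (chi M ξ)).add (hasSum_norm_sq (chi Mᶜ ξ))
  refine h1.unique ?_
  convert hasSum_norm_sq ξ using 2 with x
  simp only [chi_apply, Set.mem_compl_iff]; split_ifs <;> simp_all

lemma chi_singleton {X : Type*} [DecidableEq X] (x : X) (ξ : ell2 X) :
    chi {x} ξ = ξ x • rdelta X x := by
  classical
  ext z; simp only [chi_apply, lp.coeFn_smul, Pi.smul_apply, rdelta_apply, Set.mem_singleton_iff]
  split_ifs with h
  · subst h; simp
  · simp

lemma chi_rdelta_mem {X : Type*} [DecidableEq X] {M : Set X} {x : X} (h : x ∈ M) :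
    chi M (rdelta X x) = rdelta X x := by
  classical
  ext z; simp only [chi_apply, rdelta_apply]; split_ifs <;> simp_all

lemma chi_rdelta_notMem {X : Type*} [DecidableEq X] {M : Set X} {x : X} (h : x ∉ M) :
    chi M (rdelta X x) = 0 := by
  classical
  ext z; simp only [chi_apply, rdelta_apply, lp.coeFn_zero, Pi.zero_apply]
  split_ifs <;> simp_all

lemma chi_finset {X : Type*} [DecidableEq X] (F : Finset X) (ξ : ell2 X) :
    chi (F : Set X) ξ = ∑ x ∈ F, ξ x • rdelta X x := by
  classical
  have h := hasSum_rdelta (chi (F : Set X) ξ)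
  refine h.unique ?_
  convert hasSum_sum_of_ne_finset_zero (s := F) (L := .unconditional X)
    (f := fun x => (chi (F : Set X) ξ) x • rdelta X x) ?_ using 1
  · refine Finset.sum_congr rfl fun x hx => ?_
    rw [chi_apply_mem ξ (by simpa using hx)]
  · intro x hx
    rw [chi_apply_notMem ξ (by simpa using hx), zero_smul]

lemma tendsto_chi_finset {X : Type*} [DecidableEq X] (ξ : ell2 X) :
    Filter.Tendsto (fun F : Finset X => chi (F : Set X) ξ) Filter.atTop (nhds ξ) := by
  have h := hasSum_rdelta ξ
  rw [HasSum, SummationFilter.unconditional_filter] at h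
  simpa only [chi_finset] using h

lemma norm_sq_finset_sum {X : Type*} [DecidableEq X] (F : Finset X) (ξ : ell2 X) :
    ‖chi (F : Set X) ξ‖ ^ 2 = ∑ x ∈ F, ‖ξ x‖ ^ 2 := by
  classical
  refine (hasSum_norm_sq (chi (F : Set X) ξ)).unique ?_
  convert hasSum_sum_of_ne_finset_zero (s := F) (L := .unconditional X)
    (f := fun x => ‖(chi (F : Set X) ξ) x‖ ^ 2) ?_ using 1
  · refine Finset.sum_congr rfl fun x hx => ?_
    rw [chi_apply_mem ξ (by simpa using hx)]
  · intro x hx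
    rw [chi_apply_notMem ξ (by simpa using hx)]; simp

lemma clm_ext_rdelta {X : Type*} [DecidableEq X] {E : Type*} [NormedAddCommGroup E]
    [NormedSpace ℂ E] {a b : ell2 X →L[ℂ] E}
    (h : ∀ x, a (rdelta X x) = b (rdelta X x)) : a = b := by
  ext ξ
  have h1 := (hasSum_rdelta ξ).mapL a
  have h2 := (hasSum_rdelta ξ).mapL b
  simp only [map_smul, h] at h1 h2
  exact h1.unique h2

lemma entryOf_eq {X : Type*} [DecidableEq X] (a : BOps X) (x z : X) :
    entryOf a x z = starRingEnd ℂ ((a (rdelta X x) : ell2 X) z) := by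
  rw [entryOf, ← inner_conj_symm, inner_rdelta]

/-! ### Quasi-locality -/

/-- `b` is `(ε, s)`-quasi-local: its matrix coefficients at pairs of vectors with supports more
than `s` apart are at most `ε`, in the sense of sesquilinear forms. -/
def QLoc {X : Type*} [MetricSpace X] (b : BOps X) (ε s : ℝ) : Prop :=
  ∀ ξ η : ell2 X, (∀ x z : X, ξ x ≠ 0 → η z ≠ 0 → s < dist x z) →
    ‖⟪b ξ, η⟫_ℂ‖ ≤ ε * (‖ξ‖ * ‖η‖)

lemma QLoc.mono {X : Type*} [MetricSpace X] {b : BOps X} {ε s t : ℝ} (h : QLoc b ε s)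
    (hst : s ≤ t) : QLoc b ε t :=
  fun ξ η hξ => h ξ η fun x z hx hz => hst.trans_lt (hξ x z hx hz)

lemma QLoc.add {X : Type*} [MetricSpace X] {b c : BOps X} {ε ε' s : ℝ} (h : QLoc b ε s)
    (h' : QLoc c ε' s) : QLoc (b + c) (ε + ε') s := by
  intro ξ η hξ
  rw [_root_.add_apply, inner_add_left, add_mul]
  exact (norm_add_le _ _).trans (add_le_add (h ξ η hξ) (h' ξ η hξ))

lemma QLoc.neg {X : Type*} [MetricSpace X] {b : BOps X} {ε s : ℝ} (h : QLoc b ε s) :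
    QLoc (-b) ε s := by
  intro ξ η hξ
  rw [_root_.neg_apply, inner_neg_left, norm_neg]
  exact h ξ η hξ

lemma qloc_of_finProp {X : Type*} [MetricSpace X] [DecidableEq X] {b : BOps X} {r : ℝ}
    (h : ∀ x z : X, r < dist x z → entryOf b x z = 0) {ξ η : ell2 X}
    (hξ : ∀ x z : X, ξ x ≠ 0 → η z ≠ 0 → r < dist x z) : ⟪b ξ, η⟫_ℂ = 0 := by
  have key : ∀ z, η z ≠ 0 → (b ξ : ell2 X) z = 0 := by
    intro z hz
    have h1 := ((hasSum_rdelta ξ).mapL b).mapL (innerSL ℂ (rdelta X z))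
    simp only [map_smul, innerSL_apply_apply, inner_rdelta] at h1
    refine h1.unique ?_
    convert hasSum_zero with x
    by_cases hx : ξ x = 0
    · simp [hx]
    · have := h x z (hξ x z hx hz)
      rw [entryOf_eq] at this
      simp_all
  rw [lp.inner_eq_tsum]
  convert tsum_zero with z
  by_cases hz : η z = 0
  · simp [hz]
  · simp [key z hz]

lemma qloc_of_mem_roe {X : Type*} [MetricSpace X] [DecidableEq X] {b : BOps X}
    (hb : b ∈ RoeSet X) {ε : ℝ} (hε : 0 < ε) : ∃ s : ℕ, QLoc b ε s := by
  obtain ⟨a, ⟨r, hr⟩, hab⟩ := Metric.mem_closure_iff.1 hb ε hε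
  obtain ⟨s, hs⟩ := exists_nat_ge r
  refine ⟨s, fun ξ η hξ => ?_⟩
  have h0 : ⟪a ξ, η⟫_ℂ = 0 :=
    qloc_of_finProp hr fun x z hx hz => hs.trans_lt (hξ x z hx hz)
  have h1 : ⟪b ξ, η⟫_ℂ = ⟪(b - a) ξ, η⟫_ℂ := by
    rw [_root_.sub_apply, inner_sub_left, h0, sub_zero]
  rw [h1, ← mul_assoc]
  refine (norm_inner_le_norm _ _).trans ?_
  gcongr
  refine ((b - a).le_opNorm ξ).trans ?_
  gcongr
  rw [← dist_eq_norm]; exact hab.le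

/-! ### The uniform Roe algebra is closed under the operations used -/

lemma roe_of_finProp {X : Type*} [MetricSpace X] [DecidableEq X] {a : BOps X}
    (h : HasFinProp a) : a ∈ RoeSet X := subset_closure h

lemma HasFinProp.mul {X : Type*} [MetricSpace X] [DecidableEq X] {a b : BOps X}
    (ha : HasFinProp a) (hb : HasFinProp b) : HasFinProp (a * b) := by
  obtain ⟨r, hr⟩ := ha
  obtain ⟨s, hs⟩ := hb
  refine ⟨r + s, fun x z hxz => ?_⟩
  change ⟪a (b (rdelta X x)), rdelta X z⟫_ℂ = 0
  refine qloc_of_finProp hr fun y w hy hw => ?_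
  have hw' : w = z := by
    by_contra hne
    simp [rdelta_apply, hne] at hw
  subst hw'
  have hxy : dist x y ≤ s := by
    by_contra hlt
    have := hs x y (not_le.1 hlt)
    rw [entryOf_eq] at this
    simp_all
  linarith [dist_triangle x y w]

lemma roe_mul {X : Type*} [MetricSpace X] [DecidableEq X] {a b : BOps X}
    (ha : a ∈ RoeSet X) (hb : b ∈ RoeSet X) : a * b ∈ RoeSet X :=
  map_mem_closure₂ continuous_mul ha hb fun _ h _ h' => HasFinProp.mul h h'

lemma chi_mem_roe {X : Type*} [MetricSpace X] [DecidableEq X] (M : Set X) : chi M ∈ RoeSet X := by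
  classical
  refine roe_of_finProp ⟨0, fun x z hxz => ?_⟩
  have : z ≠ x := fun h => by simp [h] at hxz
  simp [entryOf_eq, chi_apply, rdelta_apply, this]

lemma one_mem_roe {X : Type*} [MetricSpace X] [DecidableEq X] : (1 : BOps X) ∈ RoeSet X := by
  refine roe_of_finProp ⟨0, fun x z hxz => ?_⟩
  have : z ≠ x := fun h => by simp [h] at hxz
  simp [entryOf_eq, rdelta_apply, this]

open InnerProductSpace in
lemma tendsto_rankOne {E ι : Type*} [NormedAddCommGroup E] [InnerProductSpace ℂ E]
    {l : Filter ι} {u v : ι → E} {ξ η : E} (hu : Filter.Tendsto u l (nhds ξ))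
    (hv : Filter.Tendsto v l (nhds η)) :
    Filter.Tendsto (fun i => rankOne ℂ (u i) (v i)) l (nhds (rankOne ℂ ξ η)) := by
  have h2 : Filter.Tendsto (fun i => ‖ξ‖ * ‖v i - η‖ + ‖u i - ξ‖ * ‖v i‖) l
      (nhds (‖ξ‖ * 0 + 0 * ‖η‖)) :=
    ((tendsto_iff_norm_sub_tendsto_zero.1 hv).const_mul ‖ξ‖).add
      ((tendsto_iff_norm_sub_tendsto_zero.1 hu).mul hv.norm)
  rw [mul_zero, zero_mul, add_zero] at h2
  refine tendsto_iff_norm_sub_tendsto_zero.2 (squeeze_zero (fun _ => norm_nonneg _) (fun i => ?_) h2)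
  have : rankOne ℂ (u i) (v i) - rankOne ℂ ξ η =
      rankOne ℂ ξ (v i - η) + rankOne ℂ (u i - ξ) (v i) := by
    ext ζ
    simp only [_root_.sub_apply, _root_.add_apply, rankOne_apply, inner_sub_left, sub_smul,
      smul_sub]
    abel
  rw [this]
  refine (norm_add_le _ _).trans ?_
  rw [norm_rankOne, norm_rankOne]

open InnerProductSpace in
/-- Rank-one operators lie in the uniform Roe algebra, since finitely supported vectors are
dense. -/
lemma rankOne_mem_roe {X : Type*} [MetricSpace X] [DecidableEq X] (ξ η : ell2 X) :
    rankOne ℂ ξ η ∈ RoeSet X := by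
  have hlim : Filter.Tendsto
      (fun F : Finset X => rankOne ℂ (chi (F : Set X) ξ) (chi (F : Set X) η))
      Filter.atTop (nhds (rankOne ℂ ξ η)) := by
    exact tendsto_rankOne (tendsto_chi_finset ξ) (tendsto_chi_finset η)
  refine mem_closure_of_tendsto hlim (Filter.Eventually.of_forall fun F => ?_)
  classical
  have hfin : ((fun p : X × X => dist p.1 p.2) '' ((F ×ˢ F : Finset (X × X)) : Set (X × X))).Finite :=
    (Finset.finite_toSet _).image _
  obtain ⟨r, hr⟩ := hfin.bddAbove
  refine ⟨r, fun x z hxz => ?_⟩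
  rw [entryOf_eq]
  simp only [rankOne_apply, lp.coeFn_smul, Pi.smul_apply, smul_eq_mul, map_mul]
  by_cases hx : x ∈ F
  · by_cases hz : z ∈ F
    · exact absurd (hr ⟨(x, z), by simp [hx, hz], rfl⟩) (not_le.2 hxz)
    · rw [chi_apply_notMem ξ (by simpa using hz)]; simp
  · rw [← inner_conj_symm, inner_rdelta, chi_apply_notMem η (by simpa using hx)]; simp

/-! ### Isomorphisms of uniform Roe algebras are spatial -/

lemma bmul_apply {X : Type*} (a b : BOps X) (ξ : ell2 X) : (a * b) ξ = a (b ξ) := rfl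

/-- Conjugation `a ↦ U a U⁻¹` by a unitary `U : ℓ²(X) → ℓ²(Y)`. -/
def conjU {X Y : Type*} (U : ell2 X ≃ₗᵢ[ℂ] ell2 Y) (a : BOps X) : BOps Y :=
  (U.toContinuousLinearEquiv : ell2 X →L[ℂ] ell2 Y) ∘L a ∘L
    (U.symm.toContinuousLinearEquiv : ell2 Y →L[ℂ] ell2 X)

lemma conjU_apply {X Y : Type*} (U : ell2 X ≃ₗᵢ[ℂ] ell2 Y) (a : BOps X) (ξ : ell2 Y) :
    conjU U a ξ = U (a (U.symm ξ)) := rfl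

open InnerProductSpace in
/-- The matrix unit sending `δ_z` to `δ_x`. -/
def mUnit {X : Type*} [DecidableEq X] (x z : X) : BOps X := rankOne ℂ (rdelta X x) (rdelta X z)

lemma mUnit_apply {X : Type*} [DecidableEq X] (x z : X) (ξ : ell2 X) :
    mUnit x z ξ = ξ z • rdelta X x := by
  rw [mUnit, InnerProductSpace.rankOne_apply, inner_rdelta]

lemma mUnit_mul_mul {X : Type*} [DecidableEq X] (x z w v : X) (a : BOps X) :
    mUnit x z * (a * mUnit w v) = ((a (rdelta X w) : ell2 X) z) • mUnit x v := by
  ext1 ξ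
  simp only [bmul_apply, mUnit_apply, map_smul, smul_apply, smul_smul, mul_comm,
    lp.coeFn_smul, Pi.smul_apply, smul_eq_mul]

lemma mUnit_mul {X : Type*} [DecidableEq X] (x z v : X) :
    mUnit x z * mUnit z v = mUnit x v := by
  have := mUnit_mul_mul x z z v 1
  simpa [rdelta_apply] using this

lemma star_mUnit {X : Type*} [DecidableEq X] (x z : X) : star (mUnit x z) = mUnit z x := by
  rw [mUnit, ContinuousLinearMap.star_eq_adjoint, InnerProductSpace.adjoint_rankOne, mUnit]

/-- An isomorphism of uniform Roe algebras is implemented by a unitary. The image `P` of a diagonal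
matrix unit is a minimal projection, hence of rank one; transporting a unit vector in its range by
the images of the matrix units gives an orthonormal system, and it is complete because the
algebra of `Y` contains all rank-one operators. -/
lemma exists_unitary {X Y : Type*} [MetricSpace X] [MetricSpace Y] [DecidableEq X] [DecidableEq Y]
    [Nonempty X] (h : RoeIso X Y) : ∃ U : ell2 X ≃ₗᵢ[ℂ] ell2 Y,
      (∀ a ∈ RoeSet X, conjU U a ∈ RoeSet Y) ∧
      (∀ b ∈ RoeSet Y, conjU U.symm b ∈ RoeSet X) := by
  obtain ⟨Φ, hbij, -, hsmul, hmul, hstar⟩ := h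
  obtain ⟨o⟩ := ‹Nonempty X›
  have hE : ∀ x z : X, mUnit x z ∈ RoeSet X := fun x z => rankOne_mem_roe _ _
  have h0R : (0 : BOps X) ∈ RoeSet X := by
    refine roe_of_finProp ⟨0, fun x z _ => ?_⟩
    simp [entryOf]
  have hΦ0 : Φ 0 = 0 := by
    have := hsmul 0 0 h0R
    simpa using this
  have hinj : ∀ a ∈ RoeSet X, Φ a = 0 → a = 0 := fun a ha h =>
    hbij.injOn ha h0R (h.trans hΦ0.symm)
  set P := Φ (mUnit o o) with hP
  have hPP : P * P = P := by rw [hP, ← hmul _ (hE _ _) _ (hE _ _), mUnit_mul]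
  have hPstar : ∀ ξ η, ⟪P ξ, η⟫_ℂ = ⟪ξ, P η⟫_ℂ := by
    intro ξ η
    have : star P = P := by rw [hP, ← hstar _ (hE _ _), star_mUnit]
    rw [← ContinuousLinearMap.adjoint_inner_right, ← ContinuousLinearMap.star_eq_adjoint, this]
  have hP0 : P ≠ 0 := by
    intro h
    have := hinj _ (hE o o) h
    have h2 := congrArg (fun a : BOps X => (a (rdelta X o) : ell2 X) o) this
    simp [mUnit_apply, rdelta_apply] at h2
  -- sandwiching by `P` gives scalar multiples of `P`
  have hsand : ∀ b ∈ RoeSet Y, ∃ c : ℂ, P * (b * P) = c • P := by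
    intro b hb
    obtain ⟨a, ha, rfl⟩ := hbij.surjOn hb
    refine ⟨(a (rdelta X o) : ell2 X) o, ?_⟩
    rw [hP, ← hmul _ ha _ (hE _ _), ← hmul _ (hE _ _) _ (roe_mul ha (hE _ _)), mUnit_mul_mul,
      hsmul _ _ (hE _ _)]
  obtain ⟨y, hy⟩ : ∃ y, P (rdelta Y y) ≠ 0 := by
    by_contra! hcon
    exact hP0 (clm_ext_rdelta (by simpa using hcon))
  have hrank : ∀ η, ∃ c : ℂ, P η = c • P (rdelta Y y) := by
    intro η
    by_cases hη : P η = 0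
    · exact ⟨0, by simp [hη]⟩
    obtain ⟨z, hz⟩ : ∃ z, (P η : ell2 Y) z ≠ 0 := by
      by_contra! hcon
      exact hη (by ext z; simpa using hcon z)
    obtain ⟨c, hc⟩ := hsand _ (rankOne_mem_roe (rdelta Y y) (rdelta Y z))
    have h1 := congrArg (fun a : BOps Y => a η) hc
    simp only [bmul_apply, InnerProductSpace.rankOne_apply, map_smul,
      smul_apply, inner_rdelta] at h1
    have hc0 : c ≠ 0 := by
      rintro rfl
      rw [zero_smul] at h1
      exact (smul_ne_zero hz hy) h1
    exact ⟨c⁻¹ * (P η : ell2 Y) z, by rw [mul_smul, h1, smul_smul, inv_mul_cancel₀ hc0, one_smul]⟩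
  set ξ₀ : ell2 Y := ((‖P (rdelta Y y)‖⁻¹ : ℝ) : ℂ) • P (rdelta Y y) with hξ₀
  have hξ₀n : ‖ξ₀‖ = 1 := by
    rw [hξ₀, norm_smul, Complex.norm_real, norm_inv, norm_norm,
      inv_mul_cancel₀ (norm_ne_zero_iff.2 hy)]
  have hPξ₀ : P ξ₀ = ξ₀ := by
    rw [hξ₀, map_smul]
    congr 1
    exact congrArg (fun a : BOps Y => a (rdelta Y y)) hPP
  have hrank' : ∀ η, ∃ c : ℂ, P η = c • ξ₀ := by
    intro η
    obtain ⟨c, hc⟩ := hrank η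
    refine ⟨c * ‖P (rdelta Y y)‖, ?_⟩
    rw [hc, hξ₀, smul_smul, mul_assoc, ← Complex.ofReal_mul,
      mul_inv_cancel₀ (norm_ne_zero_iff.2 hy)]
    simp
  set ζ : X → ell2 Y := fun x => Φ (mUnit x o) ξ₀ with hζ
  -- matrix coefficients of `Φ a` in the system `ζ`
  have hcoef : ∀ a ∈ RoeSet X, ∀ x z, ⟪ζ x, Φ a (ζ z)⟫_ℂ = (a (rdelta X z) : ell2 X) x := by
    intro a ha x z
    have h1 : Φ (mUnit o x) * (Φ a * Φ (mUnit z o)) = ((a (rdelta X z) : ell2 X) x) • P := by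
      rw [← hmul _ ha _ (hE _ _), ← hmul _ (hE _ _) _ (roe_mul ha (hE _ _)), mUnit_mul_mul,
        hsmul _ _ (hE _ _)]
    have h2 : ⟪ζ x, Φ a (ζ z)⟫_ℂ = ⟪ξ₀, Φ (mUnit o x) (Φ a (Φ (mUnit z o) ξ₀))⟫_ℂ := by
      rw [← star_mUnit x o, hstar _ (hE _ _), ContinuousLinearMap.star_eq_adjoint,
        ContinuousLinearMap.adjoint_inner_right]
    have h3 := congrArg (fun a : BOps Y => a ξ₀) h1
    simp only [bmul_apply, smul_apply, hPξ₀] at h3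
    rw [h2, h3, inner_smul_right, inner_self_eq_norm_sq_to_K, hξ₀n]
    simp
  have hΦ1 : ∀ z, Φ 1 (ζ z) = ζ z := by
    intro z
    have := hmul 1 one_mem_roe (mUnit z o) (hE _ _)
    rw [one_mul] at this
    exact (congrArg (fun a : BOps Y => a ξ₀) this).symm
  have horth : Orthonormal ℂ ζ := by
    rw [orthonormal_iff_ite]
    intro x z
    have := hcoef 1 one_mem_roe x z
    rw [hΦ1] at this
    rw [this]
    simp [rdelta_apply]
  have htotal : (Submodule.span ℂ (Set.range ζ))ᗮ = ⊥ := by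
    rw [Submodule.eq_bot_iff]
    intro η hη
    have hη' : ∀ x, ⟪η, ζ x⟫_ℂ = 0 := fun x =>
      (Submodule.mem_orthogonal' _ _).1 hη _ (Submodule.subset_span ⟨x, rfl⟩)
    obtain ⟨a, ha, hab⟩ := hbij.surjOn (rankOne_mem_roe η η)
    have ha0 : a = 0 := by
      refine clm_ext_rdelta fun x => ?_
      have h1 : a * mUnit x o = 0 := by
        refine hinj _ (roe_mul ha (hE _ _)) ?_
        rw [hmul _ ha _ (hE _ _), hab]
        have h2 : Φ (mUnit x o) = Φ (mUnit x o) * P := by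
          rw [hP, ← hmul _ (hE _ _) _ (hE _ _), mUnit_mul]
        rw [h2]
        ext1 θ
        obtain ⟨c, hc⟩ := hrank' θ
        simp only [bmul_apply, hc, map_smul]
        change c • (inner ℂ η (ζ x) • η) = 0
        rw [hη', zero_smul, smul_zero]
      have h2 := congrArg (fun a : BOps X => a (rdelta X o)) h1
      simpa [mUnit_apply, rdelta_apply] using h2
    rw [ha0, hΦ0] at hab
    simpa using hab.symm
  set b := HilbertBasis.mkOfOrthogonalEqBot horth htotal with hb
  have hbζ : ∀ x, b x = ζ x := fun x => by
    rw [hb, HilbertBasis.coe_mkOfOrthogonalEqBot]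
  set U : ell2 X ≃ₗᵢ[ℂ] ell2 Y := b.repr.symm with hU
  have hUδ : ∀ x, U (rdelta X x) = ζ x := by
    intro x
    rw [← hbζ, hU, rdelta]
    exact b.repr_symm_single x
  have hΦU : ∀ a ∈ RoeSet X, Φ a = conjU U a := by
    intro a ha
    have h1 : ∀ x, U.symm (Φ a (ζ x)) = a (rdelta X x) := by
      intro x
      ext z
      rw [← hcoef a ha z x, ← inner_rdelta z, ← hUδ z, ← LinearIsometryEquiv.inner_map_eq_flip]
    have h2 : (Φ a) ∘L (U.toContinuousLinearEquiv : ell2 X →L[ℂ] ell2 Y) =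
        (U.toContinuousLinearEquiv : ell2 X →L[ℂ] ell2 Y) ∘L a := by
      refine clm_ext_rdelta fun x => ?_
      change Φ a (U (rdelta X x)) = U (a (rdelta X x))
      rw [hUδ, ← h1, LinearIsometryEquiv.apply_symm_apply]
    ext1 η
    have h3 := congrArg (fun T : ell2 X →L[ℂ] ell2 Y => T (U.symm η)) h2
    change Φ a (U (U.symm η)) = U (a (U.symm η)) at h3
    rwa [LinearIsometryEquiv.apply_symm_apply] at h3
  refine ⟨U, fun a ha => hΦU a ha ▸ hbij.mapsTo ha, fun b hb => ?_⟩
  obtain ⟨a, ha, rfl⟩ := hbij.surjOn hb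
  convert ha using 1
  rw [hΦU a ha]
  ext1 ξ
  simp [conjU_apply]

/-! ### Equi-quasi-locality -/

lemma continuous_inner_chi {X : Type*} (ξ ζ : ell2 X) :
    Continuous fun c : X → Bool => ⟪chi {x | c x = true} ξ, ζ⟫_ℂ := by
  classical
  have h1 : (fun c : X → Bool => ⟪chi {x | c x = true} ξ, ζ⟫_ℂ) =
      fun c => ∑' x, (if c x = true then ⟪ξ x, ζ x⟫_ℂ else 0) := by
    ext c
    rw [lp.inner_eq_tsum]
    congr 1; ext x
    rw [chi_apply]
    by_cases h : c x = true <;> simp [h]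
  rw [h1]
  refine continuous_tsum (u := fun x => ‖ξ x‖ ^ 2 + ‖ζ x‖ ^ 2) (fun x => ?_)
    ((hasSum_norm_sq ξ).summable.add (hasSum_norm_sq ζ).summable) (fun x c => ?_)
  · exact (continuous_of_discreteTopology (f := fun b : Bool =>
      if b = true then ⟪ξ x, ζ x⟫_ℂ else 0)).comp (continuous_apply x)
  · split_ifs
    · refine (norm_inner_le_norm _ _).trans ?_
      nlinarith [sq_nonneg (‖ξ x‖ - ‖ζ x‖), sq_nonneg ‖ξ x‖, sq_nonneg ‖ζ x‖]
    · rw [norm_zero]; positivity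

lemma conjU_mul_chi_inner {X Y : Type*} (U : ell2 X ≃ₗᵢ[ℂ] ell2 Y) (v : BOps X) (M : Set X)
    (ξ η : ell2 Y) : ⟪conjU U (v * chi M) ξ, η⟫_ℂ =
      ⟪chi M (U.symm ξ), ContinuousLinearMap.adjoint v (U.symm η)⟫_ℂ := by
  rw [conjU_apply, bmul_apply, ContinuousLinearMap.adjoint_inner_right,
    LinearIsometryEquiv.inner_map_eq_flip]

/-- If conjugation by `U` maps the uniform Roe algebra of `X` into that of `Y`, then for `v` in the
algebra of `X` the operators `U v χ_M U⁻¹` are quasi-local uniformly in `M ⊆ X`. Being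
`(ε, s)`-quasi-local is a closed condition on `M ∈ {0,1}^X`, so by Baire category some `s` works on
a nonempty open set of `M`; all other `M` differ from one of these by a subset of a fixed finite
set. -/
lemma equi_qloc {X Y : Type*} [MetricSpace X] [MetricSpace Y] [DecidableEq X] [DecidableEq Y]
    {U : ell2 X ≃ₗᵢ[ℂ] ell2 Y} (hU : ∀ a ∈ RoeSet X, conjU U a ∈ RoeSet Y) {v : BOps X}
    (hv : v ∈ RoeSet X) {ε : ℝ} (hε : 0 < ε) :
    ∃ s : ℕ, ∀ M : Set X, QLoc (conjU U (v * chi M)) ε s := by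
  classical
  have hε3 : 0 < ε / 3 := by positivity
  have hql : ∀ M : Set X, ∃ s : ℕ, QLoc (conjU U (v * chi M)) (ε / 3) s := fun M =>
    qloc_of_mem_roe (hU _ (roe_mul hv (chi_mem_roe M))) hε3
  let K : ℕ → Set (X → Bool) := fun s =>
    {c | QLoc (conjU U (v * chi {x | c x = true})) (ε / 3) s}
  have hKc : ∀ s, IsClosed (K s) := by
    intro s
    simp only [K, QLoc, Set.setOf_forall]
    refine isClosed_iInter fun ξ => isClosed_iInter fun η => isClosed_iInter fun _ => ?_
    simp only [conjU_mul_chi_inner]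
    exact isClosed_le (continuous_inner_chi _ _).norm continuous_const
  have hKu : ⋃ s, K s = Set.univ := by
    refine Set.eq_univ_of_forall fun c => ?_
    obtain ⟨s, hs⟩ := hql {x | c x = true}
    exact Set.mem_iUnion.2 ⟨s, hs⟩
  obtain ⟨s₀, c₀, hc₀⟩ := nonempty_interior_of_iUnion_of_closed hKc hKu
  obtain ⟨F, u, hu, hFu⟩ := isOpen_pi_iff.1 isOpen_interior c₀ hc₀
  have hF : ∀ c : X → Bool, (∀ x ∈ F, c x = c₀ x) → c ∈ K s₀ := fun c hc =>
    interior_subset (hFu fun x hx => by rw [hc x hx]; exact (hu x hx).2)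
  choose sN hsN using hql
  refine ⟨s₀ + ∑ G ∈ F.powerset, sN (G : Set X), fun M => ?_⟩
  have hle : ∀ G ⊆ F, ((sN (G : Set X) : ℕ) : ℝ) ≤
      ((s₀ + ∑ G ∈ F.powerset, sN (G : Set X) : ℕ) : ℝ) := fun G hG => by
    have := Finset.single_le_sum (f := fun G : Finset X => sN (G : Set X))
      (fun _ _ => Nat.zero_le _) (Finset.mem_powerset.2 hG)
    exact_mod_cast this.trans (Nat.le_add_left _ _)
  set c' : X → Bool := fun x => if x ∈ F then c₀ x else decide (x ∈ M)
  set G₁ : Finset X := F.filter fun x => c₀ x = true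
  set G₂ : Finset X := F.filter fun x => x ∈ M
  have h1 : QLoc (conjU U (v * chi {x | c' x = true})) (ε / 3) s₀ :=
    hF c' fun x hx => by simp [c', hx]
  have h2 := (h1.mono (t := ((s₀ + ∑ G ∈ F.powerset, sN (G : Set X) : ℕ) : ℝ))
    (by push_cast; exact le_add_of_nonneg_right (by positivity)))
  have h3 := ((hsN (G₁ : Set X)).mono (hle G₁ (Finset.filter_subset _ _))).neg
  have h4 := ((hsN (G₂ : Set X)).mono (hle G₂ (Finset.filter_subset _ _)))
  have h5 := (h2.add h3).add h4
  convert h5 using 1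
  · ext1 ξ
    simp only [_root_.add_apply, _root_.neg_apply, conjU_apply, bmul_apply, ← map_neg, ← map_add]
    congr 2
    ext x
    simp only [lp.coeFn_add, lp.coeFn_neg, Pi.add_apply, Pi.neg_apply, chi_apply]
    by_cases hxF : x ∈ F <;> by_cases hxM : x ∈ M <;> by_cases hx0 : c₀ x = true <;>
      simp [c', G₁, G₂, hxF, hxM, hx0]
  · ring

/-! ### Large matrix entries -/

/-- Splitting `F` into `M` and `F \ M` suitably makes the signed sum of the vectors
`v x` no longer than if they were orthogonal. -/
lemma exists_sign {ι E : Type*} [DecidableEq ι] [NormedAddCommGroup E] [InnerProductSpace ℂ E]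
    (F : Finset ι) (v : ι → E) :
    ∃ M ⊆ F, ‖(2 : ℂ) • ∑ x ∈ M, v x - ∑ x ∈ F, v x‖ ^ 2 ≤ ∑ x ∈ F, ‖v x‖ ^ 2 := by
  induction F using Finset.induction_on with
  | empty => exact ⟨∅, subset_rfl, by simp⟩
  | insert a F ha ih =>
    obtain ⟨M, hMF, hM⟩ := ih
    have haM : a ∉ M := fun h => ha (hMF h)
    set u := (2 : ℂ) • ∑ x ∈ M, v x - ∑ x ∈ F, v x with hu
    have hp := parallelogram_law_with_norm ℂ u (v a)
    rw [Finset.sum_insert ha, Finset.sum_insert ha]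
    rcases le_total (‖u + v a‖) (‖u - v a‖) with h | h
    · refine ⟨insert a M, Finset.insert_subset_insert _ hMF, ?_⟩
      rw [Finset.sum_insert haM]
      have e : (2 : ℂ) • (v a + ∑ x ∈ M, v x) - (v a + ∑ x ∈ F, v x) = u + v a := by
        rw [hu, two_smul, two_smul]; abel
      rw [e]
      nlinarith [norm_nonneg (u + v a)]
    · refine ⟨M, hMF.trans (Finset.subset_insert _ _), ?_⟩
      have e : (2 : ℂ) • (∑ x ∈ M, v x) - (v a + ∑ x ∈ F, v x) = u - v a := by
        rw [hu]; abel
      rw [e]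
      nlinarith [norm_nonneg (u - v a)]

lemma symm_coord {X Y : Type*} [DecidableEq X] [DecidableEq Y] (U : ell2 X ≃ₗᵢ[ℂ] ell2 Y)
    (x : X) (y : Y) :
    (U.symm (rdelta Y y) : ell2 X) x = starRingEnd ℂ ((U (rdelta X x) : ell2 Y) y) := by
  rw [← inner_rdelta, ← inner_rdelta y, inner_conj_symm, LinearIsometryEquiv.inner_map_eq_flip]

lemma norm_symm_coord {X Y : Type*} [DecidableEq X] [DecidableEq Y] (U : ell2 X ≃ₗᵢ[ℂ] ell2 Y)
    (x : X) (y : Y) :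
    ‖(U.symm (rdelta Y y) : ell2 X) x‖ = ‖(U (rdelta X x) : ell2 Y) y‖ := by
  rw [symm_coord, RCLike.norm_conj]

/-- A reflection `2χ_M - 1` is isometric. -/
lemma norm_reflect {X : Type*} (M : Set X) (ξ : ell2 X) : ‖(2 : ℂ) • chi M ξ - ξ‖ = ‖ξ‖ := by
  classical
  have h := (hasSum_norm_sq ((2 : ℂ) • chi M ξ - ξ))
  have h2 := hasSum_norm_sq ξ
  have e : (fun x => ‖((2 : ℂ) • chi M ξ - ξ : ell2 X) x‖ ^ 2) = fun x => ‖ξ x‖ ^ 2 := by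
    ext x
    simp only [lp.coeFn_sub, Pi.sub_apply, lp.coeFn_smul, Pi.smul_apply, chi_apply]
    split_ifs
    · congr 2; rw [two_smul]; ring
    · simp
  rw [e] at h
  have := h.unique h2
  exact (sq_eq_sq₀ (norm_nonneg _) (norm_nonneg _)).1 this

/-- The sum of squares of the norms of the columns of `χ_B U` is at most `|B|`. -/
lemma sum_cols_le {X Y : Type*} [DecidableEq X] [DecidableEq Y] (U : ell2 X ≃ₗᵢ[ℂ] ell2 Y)
    (F : Finset X) (B : Finset Y) :
    ∑ x ∈ F, ‖chi (B : Set Y) (U (rdelta X x))‖ ^ 2 ≤ B.card := by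
  simp only [norm_sq_finset_sum]
  rw [Finset.sum_comm]
  calc _ ≤ ∑ y ∈ B, (1 : ℝ) := Finset.sum_le_sum fun y _ => ?_
    _ = B.card := by simp
  rw [Finset.sum_congr rfl fun x _ => by rw [← norm_symm_coord]]
  rw [← norm_sq_finset_sum]
  have h1 := norm_chi_le (F : Set X) (U.symm (rdelta Y y))
  rw [LinearIsometryEquiv.norm_map, norm_rdelta] at h1
  nlinarith [norm_nonneg (chi (F : Set X) (U.symm (rdelta Y y)))]

/-- Rows of `U` have entries that are uniformly large: if all entries of the row of `y` were small,
a choice of signs would produce `M` for which `U χ_M U⁻¹ δ_y` has a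
large component far away from `y`, against equi-quasi-locality. -/
lemma exists_delta {X Y : Type*} [MetricSpace X] [MetricSpace Y] [DecidableEq X] [DecidableEq Y]
    {U : ell2 X ≃ₗᵢ[ℂ] ell2 Y} (hU : ∀ a ∈ RoeSet X, conjU U a ∈ RoeSet Y)
    (hY : IsULFSpace Y) :
    ∃ δ : ℝ, 0 < δ ∧ ∀ y : Y, ∃ x : X, δ ≤ ‖(U (rdelta X x) : ell2 Y) y‖ := by
  classical
  obtain ⟨s, hs⟩ := equi_qloc hU one_mem_roe (ε := 1 / 8) (by norm_num)
  obtain ⟨N, hN⟩ := hY (s + 1) (by positivity)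
  refine ⟨1 / (4 * (N + 1)), by positivity, fun y => ?_⟩
  set δ : ℝ := 1 / (4 * (N + 1)) with hδ
  have hδ0 : 0 < δ := by positivity
  have hδN : δ * (N + 1) = 1 / 4 := by rw [hδ]; field_simp
  by_contra! hcon
  set ζ : ell2 X := U.symm (rdelta Y y) with hζ
  have hUζ : U ζ = rdelta Y y := U.apply_symm_apply _
  have hζ1 : ‖ζ‖ = 1 := by rw [hζ, LinearIsometryEquiv.norm_map, norm_rdelta]
  have hζs : ∀ x, ‖ζ x‖ < δ := fun x => by rw [hζ, norm_symm_coord]; exact hcon x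
  obtain ⟨hBf, hBc⟩ := hN y
  set B : Finset Y := hBf.toFinset with hB
  have hBB : (B : Set Y) = closedBall y (s + 1) := hBf.coe_toFinset
  have hBN : (B.card : ℝ) ≤ N := by
    rw [← Set.ncard_coe_finset, hBB]; exact_mod_cast hBc
  obtain ⟨F, hF⟩ : ∃ F : Finset X, ‖chi (F : Set X) ζ - ζ‖ < 1 / 8 := by
    have := (Metric.tendsto_nhds.1 (tendsto_chi_finset ζ)) (1 / 8) (by norm_num)
    obtain ⟨F, hF⟩ := this.exists
    exact ⟨F, by rwa [← dist_eq_norm]⟩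
  obtain ⟨M, hMF, hM⟩ := exists_sign F fun x => chi (B : Set Y) (U (ζ x • rdelta X x))
  simp only [← map_sum, ← chi_finset] at hM
  have hM2 : ∑ x ∈ F, ‖chi (B : Set Y) (U (ζ x • rdelta X x))‖ ^ 2 ≤ δ ^ 2 * N := by
    calc _ ≤ ∑ x ∈ F, δ ^ 2 * ‖chi (B : Set Y) (U (rdelta X x))‖ ^ 2 := by
          refine Finset.sum_le_sum fun x _ => ?_
          rw [map_smul, map_smul, norm_smul, mul_pow]
          have := (hζs x).le
          gcongr
      _ ≤ δ ^ 2 * N := by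
          rw [← Finset.mul_sum]
          gcongr
          exact (sum_cols_le U F B).trans hBN
  have hM3 : ‖chi (B : Set Y) (U ((2 : ℂ) • chi (M : Set X) ζ - chi (F : Set X) ζ))‖ ≤ 1 / 4 := by
    refine abs_le_of_sq_le_sq' ?_ (by norm_num) |>.2
    rw [map_sub, map_sub, map_smul, map_smul]
    refine hM.trans (hM2.trans ?_)
    have : (N : ℝ) ≤ (N + 1) ^ 2 := by nlinarith [Nat.cast_nonneg (α := ℝ) N]
    calc δ ^ 2 * N ≤ δ ^ 2 * (N + 1) ^ 2 := by gcongr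
      _ = (1 / 4) ^ 2 := by rw [← mul_pow, hδN]
  set w := (2 : ℂ) • chi (M : Set X) ζ - ζ with hw
  have hw1 : ‖U w‖ = 1 := by rw [LinearIsometryEquiv.norm_map, hw, norm_reflect, hζ1]
  have h1 : ‖chi (B : Set Y) (U w)‖ ≤ 1 / 4 + 1 / 8 := by
    have e : w = ((2 : ℂ) • chi (M : Set X) ζ - chi (F : Set X) ζ) + (chi (F : Set X) ζ - ζ) := by
      rw [hw]; abel
    rw [e, map_add, map_add]
    refine (norm_add_le _ _).trans (add_le_add hM3 ?_)
    refine (norm_chi_le _ _).trans ?_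
    rw [LinearIsometryEquiv.norm_map]; exact hF.le
  have h2 : ‖chi (B : Set Y)ᶜ (U (chi (M : Set X) ζ))‖ ≤ 1 / 8 := by
    set η := chi (B : Set Y)ᶜ (U (chi (M : Set X) ζ)) with hη
    have hq := hs (M : Set X) (rdelta Y y) η (fun a b ha hb => by
      have : a = y := by
        by_contra hne
        simp [rdelta_apply, hne] at ha
      subst this
      have hbB : b ∉ (B : Set Y) := by
        intro hb'
        exact hb (chi_apply_notMem _ (by simpa using hb'))
      rw [hBB, mem_closedBall, not_le, dist_comm] at hbB
      push_cast at hbB ⊢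
      linarith)
    rw [one_mul, conjU_apply, ← hζ, norm_rdelta, one_mul] at hq
    have e : ⟪U (chi (M : Set X) ζ), η⟫_ℂ = ⟪η, η⟫_ℂ := by
      rw [hη, inner_chi, chi_chi]
    rw [e, inner_self_eq_norm_sq_to_K] at hq
    simp only [norm_pow, RCLike.norm_ofReal, abs_norm] at hq
    by_contra! hlt
    nlinarith
  have h3 : ‖chi (B : Set Y)ᶜ (U w)‖ ≤ 1 / 4 := by
    have e : chi (B : Set Y)ᶜ (U w) = (2 : ℂ) • chi (B : Set Y)ᶜ (U (chi (M : Set X) ζ)) := by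
      rw [hw, map_sub, hUζ, map_sub, chi_rdelta_notMem, sub_zero, map_smul, map_smul]
      rw [Set.mem_compl_iff, not_not, hBB]
      exact mem_closedBall_self (by positivity)
    rw [e, norm_smul]
    norm_num; linarith
  have h4 : ‖U w‖ ≤ ‖chi (B : Set Y) (U w)‖ + ‖chi (B : Set Y)ᶜ (U w)‖ := by
    conv_lhs => rw [show U w = chi (B : Set Y) (U w) + chi (B : Set Y)ᶜ (U w) by
      rw [chi_compl]; abel]
    exact norm_add_le _ _
  linarith

/-! ### The coarse maps supplied by large entries -/

lemma entry_close {X Y : Type*} [MetricSpace X] [MetricSpace Y] [DecidableEq X] [DecidableEq Y]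
    {U : ell2 X ≃ₗᵢ[ℂ] ell2 Y} {v : BOps X} {x x' : X} {y y' : Y} {δ : ℝ} {s : ℝ} (hδ : 0 < δ)
    (hs : QLoc (conjU U (v * chi {x})) (δ ^ 2 / 2) s) (hv : v (rdelta X x) = rdelta X x')
    (hy : δ ≤ ‖(U (rdelta X x) : ell2 Y) y‖) (hy' : δ ≤ ‖(U (rdelta X x') : ell2 Y) y'‖) :
    dist y y' ≤ s := by
  by_contra! hlt
  have h := hs (rdelta Y y) (rdelta Y y') (fun a b ha hb => by
    have h1 : a = y := by
      by_contra hne; simp [rdelta_apply, hne] at ha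
    have h2 : b = y' := by
      by_contra hne; simp [rdelta_apply, hne] at hb
    rw [h1, h2]; exact hlt)
  rw [conjU_apply, bmul_apply, chi_singleton, map_smul, hv, map_smul, inner_smul_left,
    norm_rdelta, norm_rdelta, norm_mul, RCLike.norm_conj, norm_symm_coord,
    ← inner_conj_symm, inner_rdelta, RCLike.norm_conj] at h
  nlinarith [mul_le_mul hy hy' hδ.le (norm_nonneg _), sq_pos_of_pos hδ]

lemma close_of_entries {X Y : Type*} [MetricSpace X] [MetricSpace Y] [DecidableEq X]
    [DecidableEq Y] {U : ell2 X ≃ₗᵢ[ℂ] ell2 Y} (hU : ∀ a ∈ RoeSet X, conjU U a ∈ RoeSet Y)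
    {δ : ℝ} (hδ : 0 < δ) : ∃ s : ℕ, ∀ (x : X) (y y' : Y), δ ≤ ‖(U (rdelta X x) : ell2 Y) y‖ →
      δ ≤ ‖(U (rdelta X x) : ell2 Y) y'‖ → dist y y' ≤ s := by
  obtain ⟨s, hs⟩ := equi_qloc hU one_mem_roe (ε := δ ^ 2 / 2) (by positivity)
  exact ⟨s, fun x y y' hy hy' => entry_close hδ (hs {x}) rfl hy hy'⟩

/-- The isometry `ℓ²(ℕ) → ℓ²(X)` with `δ_n ↦ δ_{x_n}`, for `x` injective. -/
def seqIsom {X : Type*} [DecidableEq X] (x : ℕ → X) (hx : Function.Injective x) :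
    ell2 ℕ →ₗᵢ[ℂ] ell2 X :=
  (Orthonormal.orthogonalFamily (𝕜 := ℂ) (v := fun n => rdelta X (x n)) (by
    rw [orthonormal_iff_ite]
    intro i j
    simp [inner_rdelta, rdelta_apply, hx.eq_iff])).linearIsometry

lemma seqIsom_rdelta {X : Type*} [DecidableEq X] (x : ℕ → X) (hx : Function.Injective x) (n : ℕ) :
    seqIsom x hx (rdelta ℕ n) = rdelta X (x n) := by
  rw [seqIsom, rdelta, OrthogonalFamily.linearIsometry_apply_single]
  simp

lemma seqIsom_adjoint {X : Type*} [DecidableEq X] (x : ℕ → X) (hx : Function.Injective x) (w : X)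
    (n : ℕ) : (ContinuousLinearMap.adjoint (seqIsom x hx).toContinuousLinearMap (rdelta X w) :
      ell2 ℕ) n = if x n = w then 1 else 0 := by
  rw [← inner_rdelta, ContinuousLinearMap.adjoint_inner_right]
  change ⟪seqIsom x hx (rdelta ℕ n), _⟫_ℂ = _
  rw [seqIsom_rdelta, inner_rdelta, rdelta_apply]

/-- Injective sequences at bounded distance give a partial translation in the uniform Roe
algebra. -/
lemma exists_translation {X : Type*} [MetricSpace X] [DecidableEq X] {x z : ℕ → X}
    (hx : Function.Injective x) (hz : Function.Injective z) {r : ℝ}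
    (hr : ∀ n, dist (x n) (z n) ≤ r) :
    ∃ v ∈ RoeSet X, ∀ n, v (rdelta X (x n)) = rdelta X (z n) := by
  set v : BOps X := (seqIsom z hz).toContinuousLinearMap.comp
    (ContinuousLinearMap.adjoint (seqIsom x hx).toContinuousLinearMap) with hv
  have h1 : ∀ n, v (rdelta X (x n)) = rdelta X (z n) := by
    intro n
    rw [← seqIsom_rdelta z hz]
    change seqIsom z hz _ = _
    congr 1
    ext m
    refine (seqIsom_adjoint x hx _ m).trans ?_
    rw [rdelta_apply]
    simp [hx.eq_iff]
  refine ⟨v, roe_of_finProp ⟨r, fun a b hab => ?_⟩, h1⟩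
  rw [entryOf_eq]
  by_cases ha : ∃ n, x n = a
  · obtain ⟨n, rfl⟩ := ha
    rw [h1, rdelta_apply, if_neg, map_zero]
    rintro rfl
    exact (hr n).not_gt hab
  · have : v (rdelta X a) = 0 := by
      change seqIsom z hz _ = 0
      rw [← map_zero (seqIsom z hz)]
      congr 1
      ext m
      refine (seqIsom_adjoint x hx _ m).trans ?_
      rw [if_neg fun h => ha ⟨m, h⟩]; rfl
    rw [this]; simp

lemma injective_of_lt_ne {α : Type*} {u : ℕ → α} (h : ∀ m n, m < n → u m ≠ u n) : Function.Injective u := by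
  intro m n hmn
  by_contra hne
  rcases Nat.lt_or_gt_of_ne hne with hlt | hlt
  · exact h m n hlt hmn
  · exact h n m hlt hmn.symm

/-- A map `f` choosing uniformly large entries is coarse. Otherwise partial translations along a
sequence of pairs at bounded distance, with images far apart, contradict
equi-quasi-locality. -/
lemma coarse_of_entries {X Y : Type*} [MetricSpace X] [MetricSpace Y] [DecidableEq X]
    [DecidableEq Y] {U : ell2 X ≃ₗᵢ[ℂ] ell2 Y} (hU : ∀ a ∈ RoeSet X, conjU U a ∈ RoeSet Y)
    (hX : IsULFSpace X) {δ : ℝ} (hδ : 0 < δ) {f : X → Y}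
    (hf : ∀ x, δ ≤ ‖(U (rdelta X x) : ell2 Y) (f x)‖) (r : ℝ) :
    ∃ s : ℝ, ∀ x z, dist x z ≤ r → dist (f x) (f z) ≤ s := by
  classical
  by_contra! hcon
  set D : X × X → ℝ := fun p => dist (f p.1) (f p.2) with hD
  have hball : ∀ x : X, (closedBall x r).Finite := fun x => by
    obtain ⟨N, hN⟩ := hX (max r 1) (by positivity)
    exact (hN x).1.subset (closedBall_subset_closedBall (le_max_left _ _))
  obtain ⟨p, hp, hpp⟩ := exists_seq_of_forall_finset_exists
    (fun p : X × X => dist p.1 p.2 ≤ r)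
    (fun q p => q.1 ≠ p.1 ∧ q.2 ≠ p.2 ∧ D q + 1 ≤ D p) (fun S _ => by
      set T : Set (X × X) := ⋃ q ∈ S, ({q} ∪ ({q.1} ×ˢ closedBall q.1 r) ∪
        (closedBall q.2 r ×ˢ {q.2})) with hT
      have hTf : T.Finite := S.finite_toSet.biUnion fun q _ =>
        (((Set.finite_singleton _).union ((Set.finite_singleton _).prod (hball _))).union
          ((hball _).prod (Set.finite_singleton _)))
      obtain ⟨C, hC⟩ := (hTf.image D).bddAbove
      obtain ⟨a, b, hab, hCab⟩ := hcon (C + 1)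
      refine ⟨(a, b), hab, fun q hq => ⟨?_, ?_, ?_⟩⟩
      · rintro rfl
        have : (q.1, b) ∈ T := Set.mem_biUnion hq (Or.inl (Or.inr ⟨rfl, by
          simpa [dist_comm] using hab⟩))
        have := hC (Set.mem_image_of_mem D this)
        simp only [hD] at this hCab
        linarith
      · rintro rfl
        have : (a, q.2) ∈ T := Set.mem_biUnion hq (Or.inr ⟨by simpa using hab, rfl⟩)
        have := hC (Set.mem_image_of_mem D this)
        simp only [hD] at this hCab
        linarith
      · have : q ∈ T := Set.mem_biUnion hq (Or.inl (Or.inl rfl))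
        have := hC (Set.mem_image_of_mem D this)
        simp only [hD] at this hCab ⊢
        linarith)
  have hx : Function.Injective fun n => (p n).1 :=
    injective_of_lt_ne fun m n hmn => (hpp m n hmn).1
  have hz : Function.Injective fun n => (p n).2 :=
    injective_of_lt_ne fun m n hmn => (hpp m n hmn).2.1
  have hDn : ∀ n : ℕ, (n : ℝ) ≤ D (p n) := by
    intro n
    induction n with
    | zero => simp [hD]
    | succ n ih => push_cast; linarith [(hpp n (n + 1) (Nat.lt_succ_self n)).2.2]
  obtain ⟨v, hv, hvn⟩ := exists_translation hx hz hp
  obtain ⟨s, hs⟩ := equi_qloc hU hv (ε := δ ^ 2 / 2) (by positivity)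
  have h1 : D (p (s + 1)) ≤ s :=
    entry_close hδ (hs {(p (s + 1)).1}) (hvn (s + 1)) (hf _) (hf _)
  have h2 := hDn (s + 1)
  push_cast at h2
  linarith

/-! ### Uniform local finiteness -/

lemma chain_dist_le {X : Type*} [MetricSpace X] {c : ℕ → X} {m : ℕ}
    (h : ∀ i < m, dist (c i) (c (i + 1)) = 1) {i : ℕ} (hi : i ≤ m) : dist (c 0) (c i) ≤ i := by
  induction i with
  | zero => simp
  | succ i ih =>
    have h1 := ih (by omega)
    have h2 := h i (by omega)
    push_cast
    linarith [dist_triangle (c 0) (c i) (c (i + 1))]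

lemma graph_ball_card {X : Type*} [MetricSpace X] {S : Set X} {k : ℕ} (hS : S.Finite)
    (hG : GraphMetricOn S)
    (hk : ∀ x ∈ S, ({z : X | z ∈ S ∧ z ≠ x ∧ dist z x ≤ 1}).ncard ≤ k) (j : ℕ) {x : X}
    (hx : x ∈ S) : ({z | z ∈ S ∧ dist x z ≤ j}).ncard ≤ (k + 1) ^ j := by
  classical
  have hfin : ∀ j : ℕ, ({z | z ∈ S ∧ dist x z ≤ j}).Finite := fun j => hS.subset fun _ h => h.1
  have hnb : ∀ x : X, ({z : X | z ∈ S ∧ z ≠ x ∧ dist z x ≤ 1}).Finite :=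
    fun x => hS.subset fun _ h => h.1
  induction j with
  | zero =>
    have : {z | z ∈ S ∧ dist x z ≤ ((0 : ℕ) : ℝ)} ⊆ {x} := by
      rintro z ⟨_, hz⟩
      simp only [Nat.cast_zero, dist_le_zero] at hz
      exact hz.symm
    simpa using Set.ncard_le_ncard this
  | succ j ih =>
    have hsub : {z | z ∈ S ∧ dist x z ≤ ((j + 1 : ℕ) : ℝ)} ⊆
        (((hfin j).toFinset.biUnion fun z => insert z (hnb z).toFinset : Finset X) : Set X) := by
      rintro w ⟨hw, hxw⟩
      simp only [Finset.coe_biUnion, Set.mem_iUnion, Finset.mem_coe, Set.Finite.mem_toFinset,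
        Finset.mem_insert]
      obtain ⟨m, c, hm, h0, hcm, hcS, hc⟩ := hG x hx w hw
      rw [hm, Nat.cast_le] at hxw
      by_cases hmj : m ≤ j
      · exact ⟨w, ⟨hw, by rw [hm]; exact_mod_cast hmj⟩, Or.inl rfl⟩
      · have hmj' : m = j + 1 := by omega
        subst hmj'
        refine ⟨c j, ⟨hcS j (by omega), ?_⟩, ?_⟩
        · rw [← h0]; exact chain_dist_le hc (by omega)
        · by_cases hwc : w = c j
          · exact Or.inl hwc
          · refine Or.inr ⟨hw, hwc, ?_⟩
            rw [dist_comm, ← hcm, hc j (by omega)]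
    refine (Set.ncard_le_ncard hsub (Finset.finite_toSet _)).trans ?_
    rw [Set.ncard_coe_finset, pow_succ]
    refine (Finset.card_biUnion_le_card_mul _ _ (k + 1) fun z hz => ?_).trans ?_
    · refine (Finset.card_insert_le _ _).trans ?_
      have := hk z ((hfin j).mem_toFinset.1 hz).1
      rw [Set.ncard_eq_toFinset_card _ (hnb z)] at this
      omega
    · rw [Set.ncard_eq_toFinset_card _ (hfin j)] at ih
      gcongr

lemma ulf_of_cdu {X : Type*} [MetricSpace X] {Xn : ℕ → Set X} (hX : IsCDU Xn)
    (hXe : ExpanderSeq Xn) : IsULFSpace X := by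
  obtain ⟨k, h, -, hexp, -⟩ := hXe
  obtain ⟨hpart, hfin, hsep⟩ := hX
  intro r _
  obtain ⟨k₀, hk₀⟩ := hsep (r + 1)
  obtain ⟨j, hj⟩ := exists_nat_ge r
  set B : Set X := ⋃ n ∈ Finset.range k₀, Xn n with hB
  have hBf : B.Finite := (Finset.range k₀).finite_toSet.biUnion fun n _ => hfin n
  refine ⟨(k + 1) ^ j + B.ncard, fun x => ?_⟩
  obtain ⟨m, hm, -⟩ := hpart x
  have hsub : closedBall x r ⊆ {z | z ∈ Xn m ∧ dist x z ≤ j} ∪ B := by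
    intro z hz
    rw [mem_closedBall, dist_comm] at hz
    obtain ⟨n, hn, -⟩ := hpart z
    by_cases hnm : m = n
    · subst hnm
      exact Or.inl ⟨hn, hz.trans hj⟩
    · right
      by_cases hlt : n < k₀
      · exact Set.mem_biUnion (by simpa using hlt) hn
      · have := hk₀ m n hnm (by omega) x hm z hn
        linarith
  have hf1 : ({z | z ∈ Xn m ∧ dist x z ≤ j}).Finite := (hfin m).subset fun _ h => h.1
  refine ⟨(hf1.union hBf).subset hsub, ?_⟩
  refine (Set.ncard_le_ncard hsub (hf1.union hBf)).trans ((Set.ncard_union_le _ _).trans ?_)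
  gcongr
  exact graph_ball_card (hfin m) (hexp m).1 (hexp m).2.1 j hm

/-- The pieces `X_0, …, X_{n₀}` merged into one, the others kept: a coarser partition of `X` into
finite pieces at mutual distance at least `R`. -/
lemma exists_partition {X : Type*} [MetricSpace X] {Xn : ℕ → Set X} (hX : IsCDU Xn) (R : ℝ) :
    ∃ (n₀ : ℕ) (p : X → ℕ), (∀ x z, p x ≠ p z → R ≤ dist x z) ∧ (∀ k, (p ⁻¹' {k}).Finite) ∧
      (∀ k, k ≠ n₀ → (p ⁻¹' {k}).Nonempty → p ⁻¹' {k} = Xn k) := by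
  obtain ⟨hpart, hfin, hsep⟩ := hX
  choose q hq hqu using hpart
  obtain ⟨n₀, hn₀⟩ := hsep R
  have hfib : ∀ k, k ≠ n₀ → ((fun x => max (q x) n₀) ⁻¹' {k}).Nonempty →
      (fun x => max (q x) n₀) ⁻¹' {k} = Xn k := by
    rintro k hk ⟨x, hx⟩
    have hk' : n₀ < k := by
      simp only [Set.mem_preimage, Set.mem_singleton_iff] at hx; omega
    ext z
    simp only [Set.mem_preimage, Set.mem_singleton_iff]
    constructor
    · intro hz
      have : q z = k := by omega
      exact this ▸ hq z
    · intro hz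
      have := hqu z k hz
      omega
  refine ⟨n₀, fun x => max (q x) n₀, fun x z hxz => ?_, fun k => ?_, hfib⟩
  · refine hn₀ (q x) (q z) (fun h => hxz (by simp only [h])) ?_ x (hq x) z (hq z)
    by_contra hlt
    exact hxz (by simp only; omega)
  · by_cases hk : k = n₀
    · refine ((Finset.range (n₀ + 1)).finite_toSet.biUnion fun n _ => hfin n).subset
        fun x hx => ?_
      simp only [Set.mem_preimage, Set.mem_singleton_iff] at hx
      exact Set.mem_biUnion (show q x ∈ (Finset.range (n₀ + 1) : Set ℕ) by simp; omega) (hq x)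
    · by_cases hne : ((fun x => max (q x) n₀) ⁻¹' {k}).Nonempty
      · rw [hfib k hk hne]; exact hfin k
      · rw [Set.not_nonempty_iff_eq_empty.1 hne]; exact Set.finite_empty

/-! ### Comparing cardinalities of separated pieces -/

lemma qloc_norm_le {X : Type*} [MetricSpace X] {b : BOps X} {ε s : ℝ} (hε : 0 ≤ ε)
    (h : QLoc b ε s) {A C : Set X} (hAC : ∀ x ∈ A, ∀ z ∈ C, s < dist x z) (ζ : ell2 X) :
    ‖chi C (b (chi A ζ))‖ ≤ ε * ‖ζ‖ := by
  set η := chi C (b (chi A ζ)) with hη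
  have hq := h (chi A ζ) η (fun x z hx hz => hAC x (by
    by_contra hxA; exact hx (chi_apply_notMem _ hxA)) z (by
    by_contra hzC; exact hz (chi_apply_notMem _ hzC)))
  have e : ⟪b (chi A ζ), η⟫_ℂ = ⟪η, η⟫_ℂ := by
    rw [hη, inner_chi, chi_chi]
  rw [e, inner_self_eq_norm_sq_to_K] at hq
  simp only [norm_pow, RCLike.norm_ofReal, abs_norm] at hq
  have h2 := mul_le_mul_of_nonneg_left (norm_chi_le A ζ) hε
  by_contra! hlt
  have hpos : 0 < ‖η‖ := lt_of_le_of_lt (by positivity) hlt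
  nlinarith

/-- The operator `Q` commutes up to `τ` with all diagonal projections. -/
def AlmostComm {Y : Type*} (Q : BOps Y) (τ : ℝ) : Prop :=
  ∀ (B : Set Y) (ξ : ell2 Y), ‖Q (chi B ξ) - chi B (Q ξ)‖ ≤ τ * ‖ξ‖

lemma almostComm_of_qloc {X Y : Type*} [MetricSpace X] {U : ell2 X ≃ₗᵢ[ℂ] ell2 Y} {ε s : ℝ}
    (hε : 0 ≤ ε) (h : ∀ B : Set Y, QLoc (conjU U.symm (chi B)) ε s) {Z : Set X}
    (hZ : ∀ x ∈ Z, ∀ z ∉ Z, s < dist x z) : AlmostComm (conjU U (chi Z)) (2 * ε) := by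
  intro B ξ
  set ζ := U.symm ξ with hζ
  have hξ : ξ = U ζ := (U.apply_symm_apply ξ).symm
  set T := conjU U.symm (chi B) with hT
  have hTa : ∀ η, T η = U.symm (chi B (U η)) := fun η => by
    rw [hT, conjU_apply]; rfl
  have e : conjU U (chi Z) (chi B ξ) - chi B (conjU U (chi Z) ξ) =
      U (chi Z (T (chi Zᶜ ζ)) - chi Zᶜ (T (chi Z ζ))) := by
    rw [chi_compl, chi_compl, map_sub T, map_sub (chi Z), map_sub U, map_sub U, map_sub U,
      hTa, hTa, conjU_apply, conjU_apply, U.apply_symm_apply, ← hζ, U.apply_symm_apply]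
    abel
  have h1 := qloc_norm_le hε (h B) (A := Z) (C := Zᶜ) hZ ζ
  have h2 := qloc_norm_le hε (h B) (A := Zᶜ) (C := Z)
    (fun x hx z hz => by rw [dist_comm]; exact hZ z hz x hx) ζ
  rw [e, LinearIsometryEquiv.norm_map]
  refine (norm_sub_le _ _).trans ?_
  have : ‖ξ‖ = ‖ζ‖ := by rw [hζ, LinearIsometryEquiv.norm_map]
  rw [this]
  linarith

/-- If `Q` almost commutes with diagonal projections and is small on basis vectors
`δ_y`, `y ∈ V`, then it is strictly contractive on `ℓ²(V)`: choose signs making the vectors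
`ξ_y Q δ_y` behave as if they were orthogonal, and move the signs through `Q`. -/
lemma almostComm_norm_le_finset {Y : Type*} [DecidableEq Y] {Q : BOps Y} {τ : ℝ} (hτ : 0 ≤ τ)
    (hQ : AlmostComm Q τ) {V : Set Y} (hV : ∀ y ∈ V, ‖Q (rdelta Y y)‖ ≤ 1 / 2) {ξ : ell2 Y}
    (hξ : ∀ y, ξ y ≠ 0 → y ∈ V) (F : Finset Y) :
    ‖Q (chi (F : Set Y) ξ)‖ ≤ (1 / 2 + 2 * τ) * ‖chi (F : Set Y) ξ‖ := by
  set η := chi (F : Set Y) ξ with hη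
  obtain ⟨M, hMF, hM⟩ := exists_sign F fun y => Q (ξ y • rdelta Y y)
  simp only [← map_sum, ← chi_finset] at hM
  have hMη : chi (M : Set Y) ξ = chi (M : Set Y) η := by
    classical
    ext y
    rw [hη]
    simp only [chi_apply]
    by_cases hy : y ∈ (M : Set Y)
    · have : y ∈ (F : Set Y) := by exact_mod_cast hMF (by exact_mod_cast hy)
      simp only [hy, this, if_true]
    · simp only [hy, if_false]
  rw [hMη, ← hη] at hM
  have h1 : ‖(2 : ℂ) • Q (chi (M : Set Y) η) - Q η‖ ≤ 1 / 2 * ‖η‖ := by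
    refine abs_le_of_sq_le_sq' ?_ (by positivity) |>.2
    refine hM.trans ?_
    rw [mul_pow, hη, norm_sq_finset_sum, Finset.mul_sum]
    refine Finset.sum_le_sum fun y _ => ?_
    rw [map_smul, norm_smul, mul_pow, mul_comm]
    by_cases hy : ξ y = 0
    · simp [hy]
    · have := hV y (hξ y hy)
      gcongr
  have h2 := hQ (M : Set Y) η
  have h3 : ‖Q η‖ = ‖(2 : ℂ) • chi (M : Set Y) (Q η) - Q η‖ := (norm_reflect _ _).symm
  have e : (2 : ℂ) • chi (M : Set Y) (Q η) - Q η = ((2 : ℂ) • Q (chi (M : Set Y) η) - Q η) -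
      (2 : ℂ) • (Q (chi (M : Set Y) η) - chi (M : Set Y) (Q η)) := by
    rw [smul_sub]; abel
  rw [h3, e]
  refine (norm_sub_le _ _).trans ?_
  rw [norm_smul]
  norm_num at h1 h2 ⊢
  linarith

lemma almostComm_norm_le {Y : Type*} [DecidableEq Y] {Q : BOps Y} {τ : ℝ} (hτ : 0 ≤ τ)
    (hQ : AlmostComm Q τ) {V : Set Y} (hV : ∀ y ∈ V, ‖Q (rdelta Y y)‖ ≤ 1 / 2) {ξ : ell2 Y}
    (hξ : ∀ y, ξ y ≠ 0 → y ∈ V) : ‖Q ξ‖ ≤ (1 / 2 + 2 * τ) * ‖ξ‖ := by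
  have ht := tendsto_chi_finset ξ
  exact le_of_tendsto_of_tendsto' ((Q.continuous.tendsto ξ).comp ht).norm
    (ht.norm.const_mul _) (almostComm_norm_le_finset hτ hQ hV hξ)

/-- For a projection `P` almost commuting with `χ_{y}`, one of `P δ_y` and `(1 - P) δ_y` is
small. -/
lemma dichotomy {X Y : Type*} [DecidableEq Y] {U : ell2 X ≃ₗᵢ[ℂ] ell2 Y} {Z : Set X} {τ δ : ℝ}
    (hδ : 0 < δ) (hτ : τ ≤ δ / 2) (hQ : AlmostComm (conjU U (chi Z)) τ) {y : Y}
    (hy : δ ≤ ‖conjU U (chi Z) (rdelta Y y)‖) : ‖conjU U (chi Zᶜ) (rdelta Y y)‖ ≤ 1 / 2 := by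
  set ξ := conjU U (chi Zᶜ) (rdelta Y y) with hξ
  have h := hQ {y} ξ
  have h0 : conjU U (chi Z) ξ = 0 := by
    rw [hξ, conjU_apply, conjU_apply, U.symm_apply_apply, chi_compl, map_sub, chi_chi, sub_self,
      map_zero]
  have h1 : ξ y = (‖ξ‖ : ℂ) ^ 2 := by
    have e : ⟪ξ, ξ⟫_ℂ = ⟪rdelta Y y, ξ⟫_ℂ := by
      have : chi Zᶜ (U.symm ξ) = U.symm ξ := by
        rw [hξ, conjU_apply, U.symm_apply_apply, chi_chi]
      change ⟪U (chi Zᶜ (U.symm (rdelta Y y))), ξ⟫_ℂ = _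
      rw [LinearIsometryEquiv.inner_map_eq_flip, inner_chi, this,
        LinearIsometryEquiv.inner_map_map]
    rw [← inner_rdelta, ← e, inner_self_eq_norm_sq_to_K]; rfl
  rw [h0, map_zero, sub_zero, chi_singleton, map_smul, norm_smul, h1] at h
  simp only [norm_pow, Complex.norm_real, norm_norm] at h
  by_contra! hlt
  have hpos : 0 < ‖ξ‖ := by linarith
  have h3 : ‖ξ‖ * ‖conjU U (chi Z) (rdelta Y y)‖ ≤ τ := by
    by_contra! h4
    nlinarith
  nlinarith

lemma card_le_of_injOn {X Y : Type*} [DecidableEq X] [DecidableEq Y] (F : Finset Y)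
    (Z : Finset X) (T : ell2 Y →L[ℂ] ell2 X)
    (hT : ∀ ξ : ell2 Y, (∀ y, ξ y ≠ 0 → y ∈ F) → chi (Z : Set X) (T ξ) = 0 → ξ = 0) :
    F.card ≤ Z.card := by
  let L : (F → ℂ) →ₗ[ℂ] (Z → ℂ) :=
    (LinearMap.pi fun z : Z => (innerSL ℂ (rdelta X (z : X))).toLinearMap) ∘ₗ T.toLinearMap ∘ₗ
      Fintype.linearCombination ℂ (fun y : F => rdelta Y (y : Y))
  have hL : Function.Injective L := by
    rw [← LinearMap.ker_eq_bot, LinearMap.ker_eq_bot']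
    intro c hc
    set ξ : ell2 Y := ∑ y : F, c y • rdelta Y (y : Y) with hξ
    have hcoord : ∀ w : Y, ξ w = ∑ y : F, c y * (if w = y then 1 else 0) := by
      intro w
      rw [← inner_rdelta, hξ, inner_sum]
      simp only [inner_smul_right, inner_rdelta, rdelta_apply]
    have h0 : ξ = 0 := by
      refine hT ξ (fun y hy => ?_) ?_
      · by_contra hyF
        refine hy ?_
        rw [hcoord]
        refine Finset.sum_eq_zero fun z _ => ?_
        rw [if_neg, mul_zero]
        rintro rfl
        exact hyF z.2
      · ext x
        by_cases hx : x ∈ (Z : Set X)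
        · rw [chi_apply_mem _ hx, ← inner_rdelta]
          exact congrFun hc ⟨x, hx⟩
        · rw [chi_apply_notMem _ hx]; rfl
    ext y
    have := hcoord y
    rw [h0] at this
    simpa [Subtype.coe_inj] using this.symm
  have := LinearMap.finrank_le_finrank_of_injective hL
  simpa using this

/-- Separated finite pieces `Z` of `X` have as many points as the set of `y` whose row of `U`
has a large entry in `Z`. -/
lemma card_fiber {X Y : Type*} [MetricSpace X] [MetricSpace Y] [DecidableEq X] [DecidableEq Y]
    {U : ell2 X ≃ₗᵢ[ℂ] ell2 Y} (hU' : ∀ b ∈ RoeSet Y, conjU U.symm b ∈ RoeSet X) {δ : ℝ}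
    (hδ : 0 < δ) : ∃ s : ℕ, ∀ g : Y → X, (∀ y, δ ≤ ‖(U (rdelta X (g y)) : ell2 Y) y‖) →
      ∀ Z : Set X, Z.Finite → (∀ x ∈ Z, ∀ z ∉ Z, (s : ℝ) < dist x z) →
        (g ⁻¹' Z).Finite ∧ (g ⁻¹' Z).ncard = Z.ncard := by
  set ε : ℝ := min (1 / 20) (δ / 4) with hε
  have hε0 : 0 < ε := by positivity
  have hε1 : ε ≤ 1 / 20 := min_le_left _ _
  have hε2 : ε ≤ δ / 4 := min_le_right _ _
  obtain ⟨s, hs⟩ := equi_qloc hU' one_mem_roe hε0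
  simp only [one_mul] at hs
  refine ⟨s, fun g hg Z hZf hZ => ?_⟩
  have hZ' : ∀ x ∈ Zᶜ, ∀ z ∉ Zᶜ, (s : ℝ) < dist x z := fun x hx z hz => by
    rw [dist_comm]; exact hZ z (by simpa using hz) x hx
  have hP := almostComm_of_qloc hε0.le hs hZ
  have hP' := almostComm_of_qloc hε0.le hs hZ'
  have hbig : ∀ (A : Set X) (y : Y), g y ∈ A → δ ≤ ‖conjU U (chi A) (rdelta Y y)‖ := by
    intro A y hy
    refine (hg y).trans ?_
    rw [conjU_apply, LinearIsometryEquiv.norm_map, ← norm_symm_coord, ← chi_apply_mem _ hy]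
    exact norm_coord_le _ _
  have hV' : ∀ y ∈ g ⁻¹' Z, ‖conjU U (chi Zᶜ) (rdelta Y y)‖ ≤ 1 / 2 := fun y hy =>
    dichotomy hδ (by linarith) hP (hbig Z y hy)
  have hV : ∀ y ∈ (g ⁻¹' Z)ᶜ, ‖conjU U (chi Z) (rdelta Y y)‖ ≤ 1 / 2 := fun y hy => by
    have := dichotomy hδ (by linarith) hP' (hbig Zᶜ y hy)
    rwa [compl_compl] at this
  have hle : ∀ F : Finset Y, (F : Set Y) ⊆ g ⁻¹' Z → F.card ≤ hZf.toFinset.card := by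
    intro F hF
    refine card_le_of_injOn F hZf.toFinset (U.symm : ell2 Y →L[ℂ] ell2 X) fun ξ hξ h0 => ?_
    rw [hZf.coe_toFinset] at h0
    have h0' : chi Z (U.symm ξ) = 0 := h0
    have h1 := almostComm_norm_le (by positivity) hP' hV' (ξ := ξ) fun y hy => hF (hξ y hy)
    rw [conjU_apply, chi_compl, h0', sub_zero, U.apply_symm_apply] at h1
    by_contra hne
    have := norm_pos_iff.2 hne
    nlinarith
  have hfin : (g ⁻¹' Z).Finite := by
    by_contra hinf
    obtain ⟨F, hF, hc⟩ := Set.Infinite.exists_subset_card_eq hinf (hZf.toFinset.card + 1)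
    have := hle F hF
    omega
  refine ⟨hfin, ?_⟩
  rw [Set.ncard_eq_toFinset_card _ hfin, Set.ncard_eq_toFinset_card _ hZf]
  refine le_antisymm (hle _ (by simp)) ?_
  refine card_le_of_injOn hZf.toFinset hfin.toFinset (U : ell2 X →L[ℂ] ell2 Y) fun ζ hζ h0 => ?_
  rw [hfin.coe_toFinset] at h0
  have h0' : chi (g ⁻¹' Z) (U ζ) = 0 := h0
  have h1 := almostComm_norm_le (by positivity) hP hV (ξ := U ζ) fun y hy hyW => by
    refine hy ?_
    rw [← chi_apply_mem (U ζ) hyW, h0']; rfl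
  have h2 : chi Z ζ = ζ := by
    ext x
    by_cases hx : x ∈ Z
    · rw [chi_apply_mem _ hx]
    · rw [chi_apply_notMem _ hx]
      by_contra hne
      exact hx (hZf.mem_toFinset.1 (hζ x (Ne.symm hne)))
  rw [conjU_apply, U.symm_apply_apply, h2, LinearIsometryEquiv.norm_map] at h1
  by_contra hne
  have := norm_pos_iff.2 hne
  nlinarith

/-! ### Expansion and matchings -/

/-- Iterated neighbourhoods in an expander grow exponentially until they fill half of it. -/
lemma exists_growth {X : Type*} [MetricSpace X] [DecidableEq X] {h : ℝ} (hh : 0 < h)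
    {Z : Finset X} (hZ : ∀ A : Set X, A ⊆ Z →
      h * (1 - (A.ncard : ℝ) / ((Z : Set X).ncard : ℝ)) * (A.ncard : ℝ) ≤
        ((outerBdry 1 A ∩ Z).ncard : ℝ)) (t : ℕ) {S : Finset X} (hS : S ⊆ Z) :
    ∃ E ⊆ Z, S ⊆ E ∧ (∀ x ∈ E, ∃ a ∈ S, dist x a ≤ t) ∧
      (2 * E.card ≤ Z.card → (1 + h / 2) ^ t * (S.card : ℝ) ≤ E.card) := by
  classical
  induction t with
  | zero => exact ⟨S, hS, subset_rfl, fun x hx => ⟨x, hx, by simp⟩, by simp⟩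
  | succ t ih =>
    obtain ⟨E, hEZ, hSE, hd, hg⟩ := ih
    set B : Finset X := Z.filter fun x => x ∈ outerBdry 1 (E : Set X) with hB
    have hBc : ((outerBdry 1 (E : Set X) ∩ Z).ncard : ℝ) = B.card := by
      rw [← Set.ncard_coe_finset, hB, Finset.coe_filter]
      congr 2
      ext x; simp [and_comm]
    have hdisj : Disjoint E B := by
      rw [Finset.disjoint_left]
      intro x hx hxB
      exact (Finset.mem_filter.1 hxB).2.1 (by exact_mod_cast hx)
    refine ⟨E ∪ B, Finset.union_subset hEZ (Finset.filter_subset _ _),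
      hSE.trans Finset.subset_union_left, fun x hx => ?_, fun hc => ?_⟩
    · push_cast
      rcases Finset.mem_union.1 hx with hx | hx
      · obtain ⟨a, ha, hxa⟩ := hd x hx
        exact ⟨a, ha, by linarith⟩
      · obtain ⟨-, b, hb, hxb⟩ := (Finset.mem_filter.1 hx).2
        obtain ⟨a, ha, hba⟩ := hd b (by exact_mod_cast hb)
        exact ⟨a, ha, by linarith [dist_triangle x b a]⟩
    · rw [Finset.card_union_of_disjoint hdisj] at hc ⊢
      have h1 := hg (by omega)
      have h2 := hZ E (by exact_mod_cast hEZ)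
      rw [hBc, Set.ncard_coe_finset, Set.ncard_coe_finset] at h2
      have h3 : (E.card : ℝ) / Z.card ≤ 1 / 2 := by
        have : (2 * E.card : ℝ) ≤ Z.card := by exact_mod_cast (by omega : 2 * E.card ≤ Z.card)
        refine div_le_of_le_mul₀ (by positivity) (by norm_num) (by linarith)
      have h4 : h / 2 * E.card ≤ B.card := by
        refine le_trans ?_ h2
        have : h / 2 ≤ h * (1 - (E.card : ℝ) / Z.card) := by nlinarith
        gcongr
      push_cast
      rw [pow_succ]
      calc (1 + h / 2) ^ t * (1 + h / 2) * (S.card : ℝ)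
          = (1 + h / 2) * ((1 + h / 2) ^ t * (S.card : ℝ)) := by ring
        _ ≤ (1 + h / 2) * E.card := by gcongr
        _ ≤ E.card + B.card := by linarith

/-- Hall's condition. Either the `t`-neighbourhood of `A` fills less than half of the expander
`Z`, and then it is so large that its image has at least `|A|` points; or it fills more than half,
and then the neighbourhood of the image under `g` of the unmatched points is small, hence so is
the set of unmatched points. -/
lemma hall_condition {X Y : Type*} [MetricSpace X] [MetricSpace Y] [DecidableEq X]
    [DecidableEq Y] {f : X → Y} {g : Y → X} {c h : ℝ} {m : ℕ} (hh : 0 < h) (hm : 1 ≤ m)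
    (hf : ∀ r : ℝ, ∃ s : ℝ, ∀ x z, dist x z ≤ r → dist (f x) (f z) ≤ s)
    (hfg : ∀ y, dist (f (g y)) y ≤ c)
    (hfm : ∀ S : Finset X, S.card ≤ m * (S.image f).card)
    (hgm : ∀ S : Finset Y, S.card ≤ m * (S.image g).card) :
    ∃ r : ℝ, ∀ (Z : Finset X) (W : Finset Y), (∀ A : Set X, A ⊆ Z →
      h * (1 - (A.ncard : ℝ) / ((Z : Set X).ncard : ℝ)) * (A.ncard : ℝ) ≤
        ((outerBdry 1 A ∩ Z).ncard : ℝ)) → W.card = Z.card → (∀ x ∈ Z, f x ∈ W) →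
      (∀ y ∈ W, g y ∈ Z) → ∀ A ⊆ Z, A.card ≤ (W.filter fun y => ∃ x ∈ A, dist (f x) y ≤ r).card := by
  classical
  obtain ⟨t, ht⟩ := pow_unbounded_of_one_lt (m : ℝ) (by linarith : 1 < 1 + h / 2)
  obtain ⟨s₁, hs₁⟩ := hf t
  obtain ⟨s₂, hs₂⟩ := hf (t + t)
  refine ⟨max s₁ (s₂ + c), fun Z W hZ hWZ hfW hgZ A hA => ?_⟩
  set N := W.filter fun y => ∃ x ∈ A, dist (f x) y ≤ max s₁ (s₂ + c) with hN
  obtain ⟨E, hEZ, hAE, hEd, hEg⟩ := exists_growth hh hZ t hA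
  by_cases hE : 2 * E.card ≤ Z.card
  · have h1 : (m : ℝ) * A.card ≤ E.card := le_trans (by gcongr) (hEg hE)
    have h2 : m * A.card ≤ m * (E.image f).card := (by exact_mod_cast h1 : _ ≤ _).trans (hfm E)
    have h3 := Nat.le_of_mul_le_mul_left h2 hm
    refine h3.trans (Finset.card_le_card fun y hy => ?_)
    obtain ⟨e, he, rfl⟩ := Finset.mem_image.1 hy
    obtain ⟨a, ha, hea⟩ := hEd e he
    refine Finset.mem_filter.2 ⟨hfW e (hEZ he), a, ha, (hs₁ a e ?_).trans (le_max_left _ _)⟩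
    rwa [dist_comm]
  · set D := (W \ N).image g with hD
    have hDZ : D ⊆ Z := fun x hx => by
      obtain ⟨y, hy, rfl⟩ := Finset.mem_image.1 hx
      exact hgZ y (Finset.mem_sdiff.1 hy).1
    obtain ⟨E', hEZ', hDE', hEd', hEg'⟩ := exists_growth hh hZ t hDZ
    have hdisj : Disjoint E E' := by
      rw [Finset.disjoint_left]
      intro x hx hx'
      obtain ⟨a, ha, hxa⟩ := hEd x hx
      obtain ⟨d, hd, hxd⟩ := hEd' x hx'
      obtain ⟨y, hy, rfl⟩ := Finset.mem_image.1 hd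
      obtain ⟨hyW, hyN⟩ := Finset.mem_sdiff.1 hy
      refine hyN (Finset.mem_filter.2 ⟨hyW, a, ha, le_trans ?_ (le_max_right _ _)⟩)
      have h1 := hs₂ a (g y) (by
        rw [dist_comm] at hxa
        linarith [dist_triangle a x (g y)])
      linarith [dist_triangle (f a) (f (g y)) y, hfg y]
    have hcard : E.card + E'.card ≤ Z.card := by
      rw [← Finset.card_union_of_disjoint hdisj]
      exact Finset.card_le_card (Finset.union_subset hEZ hEZ')
    have h1 : (m : ℝ) * D.card ≤ E'.card := le_trans (by gcongr) (hEg' (by omega))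
    have h2 : (W \ N).card ≤ E'.card := (hgm _).trans (by exact_mod_cast h1)
    have h3 := Finset.card_le_card hAE
    have h4 : (W \ N).card + N.card = W.card :=
      Finset.card_sdiff_add_card_eq_card (Finset.filter_subset _ _)
    omega

lemma exists_matching {X Y : Type*} [MetricSpace Y] [DecidableEq X]
    [DecidableEq Y] {f : X → Y} {r : ℝ} {Z : Finset X} {W : Finset Y}
    (hall : ∀ A ⊆ Z, A.card ≤ (W.filter fun y => ∃ x ∈ A, dist (f x) y ≤ r).card) :
    ∃ φ : X → Y, Set.InjOn φ Z ∧ (∀ x ∈ Z, φ x ∈ W) ∧ ∀ x ∈ Z, dist (f x) (φ x) ≤ r := by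
  classical
  obtain ⟨ψ, hψi, hψ⟩ := (Finset.all_card_le_biUnion_card_iff_exists_injective
    fun x : Z => W.filter fun y => dist (f x) y ≤ r).1 fun s => by
      have h := hall (s.map (Function.Embedding.subtype _)) fun x hx => by
        obtain ⟨a, -, rfl⟩ := Finset.mem_map.1 hx
        exact a.2
      rw [Finset.card_map] at h
      refine h.trans (Finset.card_le_card fun y hy => ?_)
      obtain ⟨hy, x, hx, hxy⟩ := Finset.mem_filter.1 hy
      obtain ⟨a, ha, rfl⟩ := Finset.mem_map.1 hx
      exact Finset.mem_biUnion.2 ⟨a, ha, Finset.mem_filter.2 ⟨hy, hxy⟩⟩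
  refine ⟨fun x => if hx : x ∈ Z then ψ ⟨x, hx⟩ else f x, fun x hx z hz hxz => ?_,
    fun x hx => ?_, fun x hx => ?_⟩
  · have hx' : x ∈ Z := hx
    have hz' : z ∈ Z := hz
    simp only [hx', hz', dif_pos] at hxz
    exact congrArg Subtype.val (hψi hxz)
  · simp only [hx, dif_pos]
    exact (Finset.mem_filter.1 (hψ ⟨x, hx⟩)).1
  · simp only [hx, dif_pos]
    exact (Finset.mem_filter.1 (hψ ⟨x, hx⟩)).2

/-- A matching of two finite sets of the same size, without control of the distances. -/
lemma exists_matching_of_card {X Y : Type*} [MetricSpace Y] [DecidableEq X]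
    [DecidableEq Y] (f : X → Y) {Z : Finset X} {W : Finset Y} (h : W.card = Z.card) :
    ∃ (r : ℝ) (φ : X → Y), Set.InjOn φ Z ∧ (∀ x ∈ Z, φ x ∈ W) ∧
      ∀ x ∈ Z, dist (f x) (φ x) ≤ r := by
  classical
  let e : Z ≃ W := Finset.equivOfCardEq h.symm
  let φ : X → Y := fun x => if hx : x ∈ Z then e ⟨x, hx⟩ else f x
  obtain ⟨r, hr⟩ := (Z.finite_toSet.image fun x => dist (f x) (φ x)).bddAbove
  refine ⟨r, φ, fun x hx z hz hxz => ?_, fun x hx => ?_, fun x hx =>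
    hr (Set.mem_image_of_mem _ (by exact_mod_cast hx))⟩
  · have hx' : x ∈ Z := hx
    have hz' : z ∈ Z := hz
    simp only [φ, hx', hz', dif_pos] at hxz
    exact congrArg Subtype.val (e.injective (Subtype.ext hxz))
  · simp only [φ, hx, dif_pos]
    exact (e ⟨x, hx⟩).2

/-! ### Assembling the bijection -/

lemma bijCoarse_of_pieces {X Y : Type*} [MetricSpace X] [MetricSpace Y] {f : X → Y} {g : Y → X}
    {c r : ℝ} (hf : ∀ r : ℝ, ∃ s : ℝ, ∀ x z, dist x z ≤ r → dist (f x) (f z) ≤ s)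
    (hg : ∀ r : ℝ, ∃ s : ℝ, ∀ x z, dist x z ≤ r → dist (g x) (g z) ≤ s)
    (hfg : ∀ y, dist (f (g y)) y ≤ c) (hgf : ∀ x, dist (g (f x)) x ≤ c) (p : X → ℕ) (q : Y → ℕ)
    (hq : ∀ k, (q ⁻¹' {k}).Finite) (hpq : ∀ k, (q ⁻¹' {k}).ncard = (p ⁻¹' {k}).ncard)
    (φ : ℕ → X → Y) (hφi : ∀ k, Set.InjOn (φ k) (p ⁻¹' {k}))
    (hφm : ∀ k, ∀ x ∈ p ⁻¹' {k}, φ k x ∈ q ⁻¹' {k})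
    (hφr : ∀ k, ∀ x ∈ p ⁻¹' {k}, dist (f x) (φ k x) ≤ r) : BijCoarseEquiv X Y := by
  set F : X → Y := fun x => φ (p x) x with hF
  have hFr : ∀ x, dist (f x) (F x) ≤ r := fun x => hφr (p x) x rfl
  have hFq : ∀ x, q (F x) = p x := fun x => hφm (p x) x rfl
  refine ⟨F, ⟨fun x z hxz => ?_, fun y => ?_⟩, ?_, g, ?_, ?_, ?_⟩
  · have hp : p x = p z := by rw [← hFq, ← hFq, hxz]
    refine hφi (p x) rfl hp.symm ?_
    rw [hF] at hxz
    simpa only [hp] using hxz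
  · have hsub : φ (q y) '' (p ⁻¹' {q y}) ⊆ q ⁻¹' {q y} := by
      rintro _ ⟨x, hx, rfl⟩
      exact hφm _ x hx
    have heq := Set.eq_of_subset_of_ncard_le hsub
      (by rw [hpq, Set.ncard_image_of_injOn (hφi _)]) (hq _)
    have : y ∈ φ (q y) '' (p ⁻¹' {q y}) := by rw [heq]; rfl
    obtain ⟨x, hx, hxy⟩ := this
    refine ⟨x, ?_⟩
    rw [Set.mem_preimage, Set.mem_singleton_iff] at hx
    rw [hF]
    simp only [hx, hxy]
  · intro r' _
    obtain ⟨s, hs⟩ := hf r'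
    refine ⟨max 0 (s + 2 * r) + 1, by positivity, fun x z hxz => ?_⟩
    have h1 := hs x z hxz.le
    have h2 := hFr x
    have h3 := hFr z
    have h4 := dist_triangle4 (F x) (f x) (f z) (F z)
    rw [dist_comm] at h2
    have := le_max_right 0 (s + 2 * r)
    linarith
  · intro r' _
    obtain ⟨s, hs⟩ := hg r'
    refine ⟨max 0 s + 1, by positivity, fun x z hxz => ?_⟩
    have := le_max_right 0 s
    linarith [hs x z hxz.le]
  · obtain ⟨s, hs⟩ := hg r
    refine ⟨s + c, fun x => ?_⟩
    have h1 := hs (F x) (f x) (by rw [dist_comm]; exact hFr x)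
    simp only [Function.comp, id]
    linarith [dist_triangle (g (F x)) (g (f x)) x, hgf x]
  · refine ⟨r + c, fun y => ?_⟩
    have h1 := hFr (g y)
    rw [dist_comm] at h1
    simp only [Function.comp, id]
    linarith [dist_triangle (F (g y)) (f (g y)) y, hfg y]

/-- A map with a left inverse up to bounded distance, defined on a u.l.f. space, is uniformly
finite-to-one. -/
lemma exists_fiber_bound {X Y : Type*} [MetricSpace X] [MetricSpace Y] [DecidableEq Y]
    (hX : IsULFSpace X) {f : X → Y} {g : Y → X} {c : ℝ} (hc : 0 ≤ c)
    (hgf : ∀ x, dist (g (f x)) x ≤ c) :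
    ∃ m : ℕ, ∀ S : Finset X, S.card ≤ m * (S.image f).card := by
  classical
  obtain ⟨m, hm⟩ := hX (c + 1) (by linarith)
  refine ⟨m, fun S => Finset.card_le_mul_card_image S m fun y _ => ?_⟩
  have hb := hm (g y)
  refine le_trans ?_ hb.2
  rw [← Set.ncard_coe_finset]
  refine Set.ncard_le_ncard (fun x hx => ?_) hb.1
  have := (Finset.mem_filter.1 (show x ∈ _ from hx)).2
  rw [mem_closedBall, dist_comm, ← this]
  linarith [hgf x]

/-- If `X` and `Y` are coarse disjoint unions of expander graphs whose
uniform Roe algebras are isomorphic, then `X` and `Y` are bijectively coarsely equivalent. -/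
theorem stmt2 {X Y : Type*} [MetricSpace X] [MetricSpace Y] [DecidableEq X] [DecidableEq Y]
    (Xn : ℕ → Set X) (Yn : ℕ → Set Y)
    (hX : IsCDU Xn) (hY : IsCDU Yn)
    (hXe : ExpanderSeq Xn) (hYe : ExpanderSeq Yn)
    (hiso : RoeIso X Y) :
    BijCoarseEquiv X Y := by
  classical
  have hXu := ulf_of_cdu hX hXe
  have hYu := ulf_of_cdu hY hYe
  have hne : Nonempty X := by
    obtain ⟨k, h, -, -, hlim⟩ := hXe
    obtain ⟨n, hn⟩ := (hlim.eventually_ge_atTop 1).exists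
    obtain ⟨x, -⟩ := Set.nonempty_of_ncard_ne_zero (by omega : (Xn n).ncard ≠ 0)
    exact ⟨x⟩
  obtain ⟨U, hU, hU'⟩ := exists_unitary hiso
  -- `g` and `f` pick large entries in the rows and columns of `U`
  obtain ⟨δ₁, hδ₁, h₁⟩ := exists_delta hU hYu
  obtain ⟨δ₂, hδ₂, h₂⟩ := exists_delta hU' hXu
  set δ := min δ₁ δ₂ with hδ
  have hδ0 : 0 < δ := lt_min hδ₁ hδ₂
  choose g hg using fun y => (h₁ y).imp fun x hx => (min_le_left δ₁ δ₂).trans hx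
  choose f hf using fun x => (h₂ x).imp fun y hy => (min_le_right δ₁ δ₂).trans hy
  have hf' : ∀ x, δ ≤ ‖(U (rdelta X x) : ell2 Y) (f x)‖ := fun x => by
    rw [← norm_symm_coord]; exact hf x
  have hg' : ∀ y, δ ≤ ‖(U.symm (rdelta Y y) : ell2 X) (g y)‖ := fun y => by
    rw [norm_symm_coord]; exact hg y
  have hfc := coarse_of_entries hU hXu hδ0 hf'
  have hgc := coarse_of_entries hU' hYu hδ0 hg'
  obtain ⟨c₁, hc₁⟩ := close_of_entries hU hδ0
  obtain ⟨c₂, hc₂⟩ := close_of_entries hU' hδ0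
  set c : ℝ := max c₁ c₂ with hc
  have hc0 : 0 ≤ c := le_max_of_le_left (Nat.cast_nonneg _)
  have hfg : ∀ y, dist (f (g y)) y ≤ c := fun y =>
    (hc₁ (g y) _ _ (hf' _) (hg y)).trans (le_max_left _ _)
  have hgf : ∀ x, dist (g (f x)) x ≤ c := fun x =>
    (hc₂ (f x) _ _ (hg' _) (hf x)).trans (le_max_right _ _)
  obtain ⟨m₁, hm₁⟩ := exists_fiber_bound hXu hc0 hgf
  obtain ⟨m₂, hm₂⟩ := exists_fiber_bound hYu hc0 hfg
  obtain ⟨s, hs⟩ := card_fiber hU' hδ0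
  obtain ⟨n₀, p, hpR, hpf, hpX⟩ := exists_partition hX (max (s : ℝ) c + 1)
  have hsep : ∀ k, ∀ x ∈ p ⁻¹' {k}, ∀ z ∉ p ⁻¹' {k}, (s : ℝ) < dist x z := by
    intro k x hx z hz
    have := hpR x z (fun h => hz (h.symm.trans hx))
    linarith [le_max_left (s : ℝ) c]
  have hcard := fun k => hs g hg (p ⁻¹' {k}) (hpf k) (hsep k)
  have hpgf : ∀ x, p (g (f x)) = p x := by
    intro x
    by_contra hne
    have := hpR _ _ hne
    linarith [hgf x, le_max_right (s : ℝ) c]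
  obtain ⟨k₁, h, hh, hexp, -⟩ := hXe
  obtain ⟨r₁, hr₁⟩ := hall_condition (m := m₁ + m₂ + 1) hh (by omega) hfc hfg
    (fun S => (hm₁ S).trans (Nat.mul_le_mul_right _ (by omega)))
    (fun S => (hm₂ S).trans (Nat.mul_le_mul_right _ (by omega)))
  have hcard' : ∀ k, (hcard k).1.toFinset.card = (hpf k).toFinset.card := fun k => by
    rw [← Set.ncard_eq_toFinset_card _ (hcard k).1, ← Set.ncard_eq_toFinset_card _ (hpf k)]
    exact (hcard k).2
  obtain ⟨r₀, φ₀, hφ₀⟩ := exists_matching_of_card f (hcard' n₀)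
  have hφ : ∀ k, ∃ φ : X → Y, Set.InjOn φ (p ⁻¹' {k}) ∧ (∀ x ∈ p ⁻¹' {k}, φ x ∈ g ⁻¹' (p ⁻¹' {k})) ∧
      ∀ x ∈ p ⁻¹' {k}, dist (f x) (φ x) ≤ max r₀ r₁ := by
    intro k
    by_cases hk : k = n₀
    · subst hk
      obtain ⟨hi, hm, hr⟩ := hφ₀
      simp only [Set.Finite.coe_toFinset, Set.Finite.mem_toFinset] at hi hm hr
      exact ⟨φ₀, hi, hm, fun x hx => (hr x hx).trans (le_max_left _ _)⟩
    · by_cases hkne : (p ⁻¹' {k}).Nonempty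
      · have hpk := hpX k hk hkne
        obtain ⟨φ, hi, hm, hr⟩ := exists_matching (f := f) (r := r₁) (hr₁ (hpf k).toFinset
          (hcard k).1.toFinset (by
            rw [(hpf k).coe_toFinset, hpk]; exact (hexp k).2.2) (hcard' k) (fun x hx => by
            simp only [Set.Finite.mem_toFinset, Set.mem_preimage, Set.mem_singleton_iff] at hx ⊢
            rw [hpgf, hx]) (fun y hy => by
            exact (hpf k).mem_toFinset.2 ((hcard k).1.mem_toFinset.1 hy)))
        simp only [Set.Finite.coe_toFinset, Set.Finite.mem_toFinset] at hi hm hr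
        exact ⟨φ, hi, hm, fun x hx => (hr x hx).trans (le_max_right _ _)⟩
      · rw [Set.not_nonempty_iff_eq_empty] at hkne
        exact ⟨f, by simp [hkne], by simp [hkne], by simp [hkne]⟩
  choose φ hφi hφm hφr using hφ
  exact bijCoarse_of_pieces hfc hgc hfg hgf p (p ∘ g) (fun k => (hcard k).1)
    (fun k => (hcard k).2) φ hφi hφm hφr
end
end

section
/- Let X and Y be uniformly locally finite metric spaces and let f : X → Y be a coarse equivalence. Then f is close to a bijective coarse equivalence if and only if f_*([X]) = [Y] in H_0^{uf}(Y), i.e. if and only if the function y ↦ 1 − |f⁻¹({y})| is a boundary. -/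
/-!
Write `α y = |f⁻¹{y}|`. If a bijection `g` is close to `f`, the chain with one unit on each pair
`(g x, f x)` has boundary `1 - α` (`boundary_of_bijective_close`).

Conversely, compare functions `Y → ℕ` by Hall's condition at bounded scale (`CoarseLE`,
`CoarseEq`); this is an additive preorder in which multiplicities may be divided. Summing the
boundary relation over a finite set `F`, where only edges leaving `F` survive, gives
`α + L ∼ 1 + L` for some constant `L` (`coarseEq_of_boundary`). Constants cannot be cancelled
directly, but Tarski's cancellation argument applies (`CoarseEq.cancel`): since `f` is coarsely
surjective, `L` copies of the constant `1` fit, after a bounded displacement, below a multiple of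
`α`, hence `2kα ∼ 2k` for some `k > 0`, and so `α ∼ 1`. Hall's marriage theorem then gives
injections `X → Y` and `Y → X` at bounded distance from `f` and its coarse inverse, and
Schröder–Bernstein combines them into a bijection close to `f` (`exists_bijective_close`).
-/

open Metric Set

noncomputable section

/-! ### Comparing multiplicity functions at bounded scale -/

/-- Every `R`-neighbourhood of a finite set in a u.l.f. space is finite. -/
lemma exists_finset_nhd {Y : Type*} [MetricSpace Y] (hY : IsULFSpace Y) (R : ℝ) (F : Finset Y) :
    ∃ G : Finset Y, ∀ z, z ∈ G ↔ ∃ y ∈ F, dist y z ≤ R := by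
  classical
  obtain ⟨N, hN⟩ := hY (max R 1) (by positivity)
  have hfin : ∀ y : Y, {z | dist y z ≤ R}.Finite := fun y =>
    (hN y).1.subset fun z hz => by
      rw [mem_closedBall, dist_comm]
      exact le_trans hz (le_max_left _ _)
  exact ⟨F.biUnion fun y => (hfin y).toFinset, fun z => by simp⟩

/-- `CoarseLE α β` is Hall's condition, at some scale `R`, for matching `α y` copies of each
point `y` into `β z` copies of each point `z`: the `α`-mass of every finite set is at most the
`β`-mass of its `R`-neighbourhood (and of every finite set containing that neighbourhood). -/
def CoarseLE {Y : Type*} [MetricSpace Y] (α β : Y → ℕ) : Prop :=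
  ∃ R : ℝ, ∀ F G : Finset Y, (∀ y ∈ F, ∀ z, dist y z ≤ R → z ∈ G) →
    ∑ y ∈ F, α y ≤ ∑ z ∈ G, β z

/-- Two multiplicity functions satisfy Hall's condition against each other in both directions. -/
def CoarseEq {Y : Type*} [MetricSpace Y] (α β : Y → ℕ) : Prop :=
  CoarseLE α β ∧ CoarseLE β α

lemma CoarseLE.refl {Y : Type*} [MetricSpace Y] (α : Y → ℕ) : CoarseLE α α :=
  ⟨0, fun _ _ h => Finset.sum_le_sum_of_subset fun y hy => h y hy y (by simp)⟩

lemma CoarseLE.trans {Y : Type*} [MetricSpace Y] (hY : IsULFSpace Y) {α β γ : Y → ℕ}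
    (h₁ : CoarseLE α β) (h₂ : CoarseLE β γ) : CoarseLE α γ := by
  obtain ⟨R₁, h₁⟩ := h₁
  obtain ⟨R₂, h₂⟩ := h₂
  refine ⟨R₁ + R₂, fun F G h => ?_⟩
  obtain ⟨M, hM⟩ := exists_finset_nhd hY R₁ F
  refine (h₁ F M fun y hy z hz => (hM z).2 ⟨y, hy, hz⟩).trans (h₂ M G fun z hz w hw => ?_)
  obtain ⟨y, hy, hyz⟩ := (hM z).1 hz
  exact h y hy w ((dist_triangle y z w).trans (add_le_add hyz hw))

lemma CoarseLE.add {Y : Type*} [MetricSpace Y] {α β α' β' : Y → ℕ}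
    (h₁ : CoarseLE α β) (h₂ : CoarseLE α' β') : CoarseLE (α + α') (β + β') := by
  obtain ⟨R₁, h₁⟩ := h₁
  obtain ⟨R₂, h₂⟩ := h₂
  refine ⟨max R₁ R₂, fun F G h => ?_⟩
  simp only [Pi.add_apply, Finset.sum_add_distrib]
  exact add_le_add (h₁ F G fun y hy z hz => h y hy z (hz.trans (le_max_left _ _)))
    (h₂ F G fun y hy z hz => h y hy z (hz.trans (le_max_right _ _)))

/-- Multiplicities may be divided by a positive integer, because Hall's condition is a
homogeneous inequality. -/
lemma CoarseLE.of_nsmul {Y : Type*} [MetricSpace Y] {α β : Y → ℕ} {n : ℕ} (hn : 0 < n)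
    (h : CoarseLE (n • α) (n • β)) : CoarseLE α β := by
  obtain ⟨R, h⟩ := h
  refine ⟨R, fun F G hFG => ?_⟩
  have := h F G hFG
  simp only [Pi.smul_apply, smul_eq_mul, ← Finset.mul_sum] at this
  exact Nat.le_of_mul_le_mul_left this hn

lemma CoarseEq.refl {Y : Type*} [MetricSpace Y] (α : Y → ℕ) : CoarseEq α α :=
  ⟨.refl α, .refl α⟩

lemma CoarseEq.symm {Y : Type*} [MetricSpace Y] {α β : Y → ℕ} (h : CoarseEq α β) :
    CoarseEq β α :=
  ⟨h.2, h.1⟩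

lemma CoarseEq.trans {Y : Type*} [MetricSpace Y] (hY : IsULFSpace Y) {α β γ : Y → ℕ}
    (h₁ : CoarseEq α β) (h₂ : CoarseEq β γ) : CoarseEq α γ :=
  ⟨h₁.1.trans hY h₂.1, h₂.2.trans hY h₁.2⟩

lemma CoarseEq.add {Y : Type*} [MetricSpace Y] {α β α' β' : Y → ℕ}
    (h₁ : CoarseEq α β) (h₂ : CoarseEq α' β') : CoarseEq (α + α') (β + β') :=
  ⟨h₁.1.add h₂.1, h₁.2.add h₂.2⟩

lemma CoarseEq.nsmul {Y : Type*} [MetricSpace Y] {α β : Y → ℕ} (h : CoarseEq α β) (n : ℕ) :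
    CoarseEq (n • α) (n • β) := by
  induction n with
  | zero => simpa using CoarseEq.refl (0 : Y → ℕ)
  | succ n ih => simpa only [succ_nsmul] using ih.add h

/-- Cancellation, as in Tarski's type semigroup: from `α + Lβ ∼ (L + 1)β` one gets `α ∼ β` as
soon as `L` copies of (a function equivalent to) `β` fit below a multiple of `α`. -/
lemma CoarseEq.cancel {Y : Type*} [MetricSpace Y] (hY : IsULFSpace Y) {α β β' : Y → ℕ} {L k : ℕ}
    (h : CoarseEq (α + L • β) ((L + 1) • β)) (hβ : CoarseEq β' β)
    (hle : ∀ y, L * β' y ≤ k * α y) (hLk : L ≤ k) (hk : 0 < k) : CoarseEq α β := by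
  have hn : ∀ n : ℕ, CoarseEq (n • α + L • β) ((n + L) • β) := by
    intro n
    induction n with
    | zero => simpa using CoarseEq.refl (L • β)
    | succ n ih =>
      have h₁ := (CoarseEq.refl α).add ih
      have h₂ := h.add (CoarseEq.refl (n • β))
      have e₁ : α + (n • α + L • β) = (n + 1) • α + L • β := by module
      have e₂ : α + (n + L) • β = α + L • β + n • β := by module
      have e₃ : (L + 1) • β + n • β = (n + 1 + L) • β := by module
      rw [e₁, e₂] at h₁
      rw [e₃] at h₂
      exact h₁.trans hY h₂
  obtain ⟨δ, hδ⟩ : ∃ δ : Y → ℕ, k • α = L • β' + δ :=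
    ⟨fun y => k * α y - L * β' y, by
      funext y
      simp only [Pi.smul_apply, Pi.add_apply, smul_eq_mul]
      have := hle y
      omega⟩
  obtain ⟨m, rfl⟩ := Nat.exists_eq_add_of_le hLk
  -- The chain is `2kα = kα + Lβ' + δ ∼ kα + Lβ + δ ∼ (k + L)β + δ ∼ kβ + (Lβ' + δ) = kβ + kα`
  -- followed by `kβ + kα = mβ + (kα + Lβ) ∼ mβ + (k + L)β = 2kβ`, where `k = L + m`.
  have c₁ := ((CoarseEq.refl ((L + m) • α)).add (hβ.nsmul L)).add (CoarseEq.refl δ)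
  have c₂ := (hn (L + m)).add (CoarseEq.refl δ)
  have c₃ := ((CoarseEq.refl ((L + m) • β)).add (hβ.symm.nsmul L)).add (CoarseEq.refl δ)
  have c₄ := (CoarseEq.refl (m • β)).add (hn (L + m))
  have e₁ : (L + m) • α + L • β' + δ = (2 * (L + m)) • α := by
    rw [add_assoc, ← hδ]; module
  have e₂ : (L + m + L) • β + δ = (L + m) • β + L • β + δ := by module
  have e₃ : (L + m) • β + L • β' + δ = m • β + ((L + m) • α + L • β) := by
    rw [add_assoc, ← hδ]; module
  have e₄ : m • β + (L + m + L) • β = (2 * (L + m)) • β := by module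
  rw [e₁] at c₁
  rw [e₂] at c₂
  rw [e₃] at c₃
  rw [e₄] at c₄
  have c := ((c₁.trans hY c₂).trans hY c₃).trans hY c₄
  exact ⟨c.1.of_nsmul (by omega), c.2.of_nsmul (by omega)⟩

/-! ### Fibres and pushforwards -/

/-- The mass of the fibre-counting function of `f` over a finite set is the number of points
of `X` lying above it. -/
lemma sum_ncard_fiber {X Y : Type*} [DecidableEq Y] (f : X → Y) (G : Finset Y) (S : Finset X)
    (hS : ∀ x, x ∈ S ↔ f x ∈ G) : S.card = ∑ y ∈ G, (f ⁻¹' {y}).ncard := by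
  rw [Finset.card_eq_sum_card_fiberwise (f := f) (t := G) fun x hx => (hS x).1 hx]
  refine Finset.sum_congr rfl fun y hy => ?_
  rw [← Set.ncard_coe_finset]
  congr 1
  ext x
  simp only [Finset.coe_filter, mem_ofPred_eq, mem_preimage, mem_singleton_iff, hS]
  exact ⟨fun h => h.2, fun h => ⟨h ▸ hy, h⟩⟩

lemma exists_preimage_finset {X Y : Type*} (f : X → Y)
    (hfib : ∀ y, (f ⁻¹' {y}).Finite) (G : Finset Y) : ∃ S : Finset X, ∀ x, x ∈ S ↔ f x ∈ G := by
  have : (f ⁻¹' (G : Set Y)).Finite := G.finite_toSet.preimage' fun y _ => hfib y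
  exact ⟨this.toFinset, fun x => by simp⟩

/-- Moving every point of `Y` by a bounded amount does not change the class of `1`. -/
lemma coarseEq_one_of_close {Y : Type*} [MetricSpace Y] (p : Y → Y)
    (hfib : ∀ y, (p ⁻¹' {y}).Finite) {C : ℝ} (hp : ∀ y, dist (p y) y ≤ C) :
    CoarseEq (fun y => (p ⁻¹' {y}).ncard) 1 := by
  classical
  constructor
  · refine ⟨C, fun F G h => ?_⟩
    obtain ⟨S, hS⟩ := exists_preimage_finset p hfib F
    rw [← sum_ncard_fiber p F S hS]
    simp only [Pi.one_apply, Finset.sum_const, smul_eq_mul, mul_one]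
    exact Finset.card_le_card fun y hy => h _ ((hS y).1 hy) y (hp y)
  · refine ⟨C, fun F G h => ?_⟩
    obtain ⟨S, hS⟩ := exists_preimage_finset p hfib G
    rw [← sum_ncard_fiber p G S hS]
    simp only [Pi.one_apply, Finset.sum_const, smul_eq_mul, mul_one]
    exact Finset.card_le_card fun y hy => (hS y).2 (h y hy _ (by rw [dist_comm]; exact hp y))

/-! ### Boundaries and Hall's condition -/

/-- If `1 - α` is a boundary then `α` and `1` become equivalent after adding a large multiple
of `1`: the total of `1 - α` over a finite set `F` is carried by the edges leaving `F`, whose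
number is at most a constant times the number of points of `G ∖ F` when `G` contains the
neighbourhood of `F`. -/
lemma coarseEq_of_boundary {Y : Type*} [MetricSpace Y] (hY : IsULFSpace Y) (α : Y → ℕ)
    (h : UFBoundary fun y : Y => 1 - (α y : ℤ)) :
    ∃ L : ℕ, CoarseEq (α + L • 1) ((L + 1) • 1) := by
  classical
  obtain ⟨b, K, r, hK, hr, hb⟩ := h
  obtain ⟨N, hN⟩ := hY (max r 1) (by positivity)
  set L : ℕ := N * (2 * K.natAbs) with hL
  have key : ∀ F G : Finset Y, (∀ y ∈ F, ∀ z, dist y z ≤ max r 1 → z ∈ G) →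
      F ⊆ G ∧ |∑ y ∈ F, (1 - (α y : ℤ))| ≤ L * ((G.card : ℤ) - F.card) := by
    intro F G hFG
    have hsub : F ⊆ G := fun y hy => hFG y hy y (by simp)
    refine ⟨hsub, ?_⟩
    have e₁ : ∑ y ∈ F, (1 - (α y : ℤ)) = ∑ y ∈ F, ∑ z ∈ G, (b y z - b z y) := by
      refine Finset.sum_congr rfl fun y hy => ?_
      refine (hb y).trans (finsum_eq_sum_of_support_subset _ fun z hz => ?_)
      refine hFG y hy z (le_trans ?_ (le_max_left _ _))
      by_contra hlt
      refine hz ?_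
      have h₁ : b y z = 0 := by
        by_contra h'
        exact hlt (hr _ _ h')
      have h₂ : b z y = 0 := by
        by_contra h'
        exact hlt (dist_comm y z ▸ hr _ _ h')
      simp [h₁, h₂]
    -- Edges inside `F` cancel.
    have e₂ : ∑ y ∈ F, ∑ z ∈ F, (b y z - b z y) = 0 := by
      simp only [Finset.sum_sub_distrib]
      rw [Finset.sum_comm, sub_self]
    have e₃ : ∑ y ∈ F, (1 - (α y : ℤ)) = ∑ z ∈ G \ F, ∑ y ∈ F, (b y z - b z y) := by
      rw [e₁, Finset.sum_comm (s := G \ F)]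
      rw [← add_zero (∑ y ∈ F, ∑ z ∈ G \ F, (b y z - b z y)), ← e₂, ← Finset.sum_add_distrib]
      exact Finset.sum_congr rfl fun y _ => (Finset.sum_sdiff hsub).symm
    -- Each point is an endpoint of at most `N` edges, each of weight at most `2 |K|`.
    have e₄ : ∀ z, |∑ y ∈ F, (b y z - b z y)| ≤ L := by
      intro z
      have hs : ∑ y ∈ F with dist y z ≤ r, (b y z - b z y) = ∑ y ∈ F, (b y z - b z y) := by
        refine Finset.sum_filter_of_ne fun y _ hne => ?_
        by_contra hlt
        refine hne ?_
        have h₁ : b y z = 0 := by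
          by_contra h'
          exact hlt (hr _ _ h')
        have h₂ : b z y = 0 := by
          by_contra h'
          exact hlt (dist_comm y z ▸ hr _ _ h')
        simp [h₁, h₂]
      have hc : (F.filter fun y => dist y z ≤ r).card ≤ N := by
        rw [← Set.ncard_coe_finset]
        refine (Set.ncard_le_ncard ?_ (hN z).1).trans (hN z).2
        intro y hy
        have := (Finset.mem_filter.1 (Finset.mem_coe.1 hy)).2
        exact mem_closedBall.2 (this.trans (le_max_left _ _))
      rw [← hs]
      refine (Finset.abs_sum_le_sum_abs _ _).trans ?_
      refine (Finset.sum_le_card_nsmul _ _ (2 * |K|) fun y _ => ?_).trans ?_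
      · have h₁ := (hK y z).trans (le_abs_self K)
        have h₂ := (hK z y).trans (le_abs_self K)
        have h₃ := abs_sub (b y z) (b z y)
        linarith
      · rw [nsmul_eq_mul, hL]
        push_cast
        gcongr
    rw [e₃]
    refine (Finset.abs_sum_le_sum_abs _ _).trans ?_
    refine (Finset.sum_le_card_nsmul _ _ (L : ℤ) fun z _ => e₄ z).trans ?_
    rw [nsmul_eq_mul, Finset.card_sdiff_of_subset hsub, Nat.cast_sub (Finset.card_le_card hsub),
      mul_comm]
  refine ⟨L, ⟨max r 1, fun F G h => ?_⟩, ⟨max r 1, fun F G h => ?_⟩⟩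
  · obtain ⟨hsub, hab⟩ := key F G h
    have hcard : (F.card : ℤ) ≤ G.card := by exact_mod_cast Finset.card_le_card hsub
    zify
    simp [Finset.sum_add_distrib] at hab ⊢
    have := (abs_le.1 hab).1
    linarith
  · obtain ⟨hsub, hab⟩ := key F G h
    have hcard : (F.card : ℤ) ≤ G.card := by exact_mod_cast Finset.card_le_card hsub
    have hmono : (∑ y ∈ F, (α y : ℤ)) ≤ ∑ y ∈ G, (α y : ℤ) := by
      exact_mod_cast Finset.sum_le_sum_of_subset hsub
    zify
    simp [Finset.sum_add_distrib] at hab ⊢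
    have := (abs_le.1 hab).2
    linarith

/-- Hall's theorem in both directions, glued by Schröder–Bernstein, turns an equivalence between
the fibre-counting function and `1` into a bijection close to `f`. -/
lemma exists_bijective_close {X Y : Type*} [MetricSpace Y] (hY : IsULFSpace Y)
    (f : X → Y) (hfib : ∀ y, (f ⁻¹' {y}).Finite)
    (h : CoarseEq (fun y => (f ⁻¹' {y}).ncard) 1) :
    ∃ (g : X → Y) (R : ℝ), Function.Bijective g ∧ ∀ x, dist (f x) (g x) ≤ R := by
  classical
  obtain ⟨⟨R₁, h₁⟩, ⟨R₂, h₂⟩⟩ := h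
  choose nb hnb using fun (R : ℝ) (F : Finset Y) => exists_finset_nhd hY R F
  choose pre hpre using fun G : Finset Y => exists_preimage_finset f hfib G
  obtain ⟨φ, hφ, hφ'⟩ := (Finset.all_card_le_biUnion_card_iff_exists_injective
    (fun x : X => nb R₁ {f x})).1 (by
      intro s
      have hs := h₁ (s.image f) (s.biUnion fun x => nb R₁ {f x}) (by
        intro y hy z hz
        obtain ⟨x, hx, rfl⟩ := Finset.mem_image.1 hy
        exact Finset.mem_biUnion.2 ⟨x, hx, (hnb _ _ _).2 ⟨f x, by simp, hz⟩⟩)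
      rw [← sum_ncard_fiber f _ _ (hpre _)] at hs
      simp only [Pi.one_apply, Finset.sum_const, smul_eq_mul, mul_one] at hs
      exact (Finset.card_le_card fun x hx =>
        (hpre _ x).2 (Finset.mem_image_of_mem f hx)).trans hs)
  obtain ⟨ψ, hψ, hψ'⟩ := (Finset.all_card_le_biUnion_card_iff_exists_injective
    (fun y : Y => pre (nb R₂ {y}))).1 (by
      intro s
      have hs := h₂ s (nb R₂ s) (fun y hy z hz => (hnb _ _ _).2 ⟨y, hy, hz⟩)
      rw [← sum_ncard_fiber f _ _ (hpre _)] at hs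
      simp only [Pi.one_apply, Finset.sum_const, smul_eq_mul, mul_one] at hs
      refine hs.trans (Finset.card_le_card fun x hx => ?_)
      obtain ⟨y, hy, hyx⟩ := (hnb _ _ _).1 ((hpre _ _).1 hx)
      exact Finset.mem_biUnion.2 ⟨y, hy, (hpre _ _).2 ((hnb _ _ _).2 ⟨y, by simp, hyx⟩)⟩)
  obtain ⟨g, hg, hgR⟩ := Function.Embedding.schroeder_bernstein_of_rel hφ hψ
    (fun x y => dist (f x) y ≤ max R₁ R₂)
    (fun x => by
      obtain ⟨y, hy, hd⟩ := (hnb _ _ _).1 (hφ' x)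
      rw [Finset.mem_singleton.1 hy] at hd
      exact hd.trans (le_max_left _ _))
    (fun y => by
      obtain ⟨y', hy', hd⟩ := (hnb _ _ _).1 ((hpre _ _).1 (hψ' y))
      rw [Finset.mem_singleton.1 hy', dist_comm] at hd
      exact hd.trans (le_max_right _ _))
  exact ⟨g, max R₁ R₂, hg, hgR⟩

/-! ### Coarse equivalences -/

/-- The fibres of a coarse equivalence lie in balls around the values of a coarse inverse. -/
lemma CoarseEquivMap.finite_fiber {X Y : Type*} [MetricSpace X] [MetricSpace Y]
    (hX : IsULFSpace X) {f : X → Y} (hf : CoarseEquivMap f) (y : Y) : (f ⁻¹' {y}).Finite := by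
  obtain ⟨_, g, _, ⟨C, hC⟩, _⟩ := hf
  obtain ⟨N, hN⟩ := hX (max C 1) (by positivity)
  refine (hN (g y)).1.subset fun x hx => ?_
  have h := hC x
  simp only [Function.comp_apply, id_eq, mem_preimage, mem_singleton_iff] at h hx
  rw [hx, dist_comm] at h
  exact mem_closedBall.2 (h.trans (le_max_left _ _))

lemma CoarseEquivMap.of_close_s4 {X Y : Type*} [MetricSpace X] [MetricSpace Y]
    {f g : X → Y} (hf : CoarseEquivMap f) {C : ℝ} (hfg : ∀ x, dist (f x) (g x) ≤ C) :
    CoarseEquivMap g := by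
  obtain ⟨hc, h, hh, ⟨A, hA⟩, ⟨B, hB⟩⟩ := hf
  refine ⟨fun r hr => ?_, h, hh, ?_, B + C, fun y => ?_⟩
  · obtain ⟨s, hs, hs'⟩ := hc r hr
    refine ⟨s + 2 * |C|, by positivity, fun x z hxz => ?_⟩
    have h₁ := dist_triangle4 (g x) (f x) (f z) (g z)
    have h₂ := hfg x
    have h₃ := hfg z
    rw [dist_comm] at h₂
    linarith [hs' x z hxz, le_abs_self C]
  · obtain ⟨s, hs, hs'⟩ := hh (|C| + 1) (by positivity)
    refine ⟨s + A, fun x => ?_⟩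
    have h₁ := hs' (g x) (f x) (by rw [dist_comm]; linarith [hfg x, le_abs_self C])
    have h₂ := hA x
    have h₃ := dist_triangle (h (g x)) (h (f x)) x
    simp only [Function.comp_apply, id_eq] at h₂ ⊢
    linarith
  · have h₁ := hB y
    have h₂ := hfg (h y)
    have h₃ := dist_triangle (g (h y)) (f (h y)) y
    rw [dist_comm] at h₂
    simp only [Function.comp_apply, id_eq] at h₁ ⊢
    linarith

/-- For a bijection `g` close to `f`, sending one unit along each pair `(g x, f x)` exhibits
`1 - |f⁻¹|` as a boundary. -/
lemma boundary_of_bijective_close {X Y : Type*} [MetricSpace Y]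
    (f g : X → Y) (hfib : ∀ y, (f ⁻¹' {y}).Finite) (hg : Function.Bijective g)
    {C : ℝ} (hfg : ∀ x, dist (f x) (g x) ≤ C) :
    UFBoundary (fun y : Y => 1 - ((f ⁻¹' {y}).ncard : ℤ)) := by
  classical
  let e : X ≃ Y := Equiv.ofBijective g hg
  have he : ∀ y, g (e.symm y) = y := fun y => e.apply_symm_apply y
  refine ⟨fun y z => if f (e.symm y) = z then 1 else 0, 1, C, fun y z => ?_, fun y z hne => ?_,
    fun y => ?_⟩
  · dsimp only
    split_ifs <;> simp
  · have h : f (e.symm y) = z := by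
      by_contra h
      exact hne (if_neg h)
    have := hfg (e.symm y)
    rwa [he, h, dist_comm] at this
  · obtain ⟨S, hS⟩ := exists_preimage_finset f hfib {y}
    have hsupp : Function.support (fun z => if f (e.symm z) = y then (1 : ℤ) else 0) ⊆
        ((S.map e.toEmbedding : Finset Y) : Set Y) := by
      intro z hz
      have h : f (e.symm z) = y := by
        by_contra h
        exact hz (if_neg h)
      simp only [Finset.coe_map, Equiv.coe_toEmbedding, mem_image, Finset.mem_coe]
      exact ⟨e.symm z, (hS _).2 (by simpa using h), by simp⟩
    have h₁ : ∑ᶠ z, (if f (e.symm y) = z then (1 : ℤ) else 0) = 1 := by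
      rw [finsum_eq_single _ (f (e.symm y)) fun z hz => if_neg hz.symm, if_pos rfl]
    have h₂ : ∑ᶠ z, (if f (e.symm z) = y then (1 : ℤ) else 0) = ((f ⁻¹' {y}).ncard : ℤ) := by
      rw [finsum_eq_sum_of_support_subset _ hsupp, Finset.sum_map]
      have hc := sum_ncard_fiber f {y} S hS
      rw [Finset.sum_singleton] at hc
      rw [← hc, Finset.card_eq_sum_ones, Nat.cast_sum]
      refine Finset.sum_congr rfl fun x hx => ?_
      have : f x = y := by simpa using (hS x).1 hx
      simp [this]
    rw [finsum_sub_distrib ?_ ?_, h₁, h₂]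
    · exact (Set.finite_singleton (f (e.symm y))).subset fun z hz => by
        by_contra h
        exact hz (if_neg fun h' => h h'.symm)
    · exact (Finset.finite_toSet _).subset hsupp


/-- A coarse equivalence `f : X → Y` between u.l.f. metric spaces is close to
a bijective coarse equivalence iff `y ↦ 1 - |f⁻¹({y})|` is a boundary in uniformly finite
homology. -/
theorem stmt4 {X Y : Type*} [MetricSpace X] [MetricSpace Y]
    (hX : IsULFSpace X) (hY : IsULFSpace Y)
    (f : X → Y) (hf : CoarseEquivMap f) :
    (∃ g : X → Y, Function.Bijective g ∧ CoarseEquivMap g ∧ CloseMaps f g) ↔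
    UFBoundary (fun y : Y => 1 - ((f ⁻¹' {y}).ncard : ℤ)) := by
  constructor
  · rintro ⟨g, hg, -, C, hC⟩
    exact boundary_of_bijective_close f g (hf.finite_fiber hX) hg hC
  · intro hb
    have hfib := hf.finite_fiber hX
    obtain ⟨L, hL⟩ := coarseEq_of_boundary hY (fun y => (f ⁻¹' {y}).ncard) hb
    obtain ⟨-, h, -, -, C, hC⟩ := id hf
    obtain ⟨N, hN⟩ := hY (max C 1) (by positivity)
    have hsub : ∀ y, (f ∘ h) ⁻¹' {y} ⊆ closedBall y (max C 1) := by
      intro y z hz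
      have h₁ := hC z
      rw [mem_singleton_iff.1 hz, id_eq, dist_comm] at h₁
      exact mem_closedBall.2 (h₁.trans (le_max_left _ _))
    have hpfib : ∀ y, ((f ∘ h) ⁻¹' {y}).Finite := fun y => (hN y).1.subset (hsub y)
    have hα : CoarseEq (fun y => (f ⁻¹' {y}).ncard) 1 := by
      refine CoarseEq.cancel hY (L := L) (k := L * N + L + 1) hL
        (coarseEq_one_of_close (f ∘ h) hpfib hC) (fun y => ?_) (by nlinarith) (by omega)
      -- A nonempty fibre of `f ∘ h` has at most `N` points and forces `f⁻¹{y}` to be nonempty.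
      rcases Set.eq_empty_or_nonempty ((f ∘ h) ⁻¹' {y}) with h0 | ⟨z, hz⟩
      · simp [h0]
      · have h₁ : ((f ∘ h) ⁻¹' {y}).ncard ≤ N :=
          (Set.ncard_le_ncard (hsub y) (hN y).1).trans (hN y).2
        have h₂ : 1 ≤ (f ⁻¹' {y}).ncard := (Set.ncard_pos (hfib y)).2 ⟨h z, hz⟩
        calc L * ((f ∘ h) ⁻¹' {y}).ncard ≤ L * N := by gcongr
          _ ≤ (L * N + L + 1) * 1 := by omega
          _ ≤ (L * N + L + 1) * (f ⁻¹' {y}).ncard := by gcongr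
    obtain ⟨g, R, hg, hgR⟩ := exists_bijective_close hY f hfib hα
    exact ⟨g, hg, hf.of_close_s4 hgR, R, hgR⟩
end
end
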